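/- arXiv:2512.00584 — 2 statements merged into one kernel-verified Lean document; each statement's English description precedes it below -/
import Mathlib

section
/- If a graph (1-dimensional simplicial complex) Γ on vertex set {0,…,n} is Gröbner smoothable over some field K, then Γ is a tree. -/
open MvPolynomial

/-- The leading exponent (multidegree) of a multivariate polynomial with respect to a
monomial order: the maximum of its support. (It is `0` for the zero polynomial.) -/
noncomputable def MonomialOrder.mdeg {σ : Type*} (m : MonomialOrder σ) {R : Type*}
    [CommSemiring R] (f : MvPolynomial σ R) : σ →₀ ℕ :=
  m.toSyn.symm (f.support.sup fun e => m.toSyn e)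

/-- The initial ideal of an ideal `I` with respect to a monomial order. -/
noncomputable def initialIdeal {σ : Type*} {K : Type*} [Field K] (m : MonomialOrder σ)
    (I : Ideal (MvPolynomial σ K)) : Ideal (MvPolynomial σ K) :=
  Ideal.span {g | ∃ f ∈ I, f ≠ 0 ∧ g = monomial (m.mdeg f) (1 : K)}

/-- An ideal is homogeneous (w.r.t. the standard grading) iff it contains all homogeneous
components of its elements. -/
def IsHomog {σ : Type*} {K : Type*} [Field K] (I : Ideal (MvPolynomial σ K)) : Prop :=
  ∀ f ∈ I, ∀ d : ℕ, homogeneousComponent d f ∈ I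

/-- An abstract simplicial complex on the vertex set `{0, …, n}`. -/
structure SComplex (n : ℕ) where
  faces : Set (Finset (Fin (n + 1)))
  down_closed : ∀ {s t : Finset (Fin (n + 1))}, s ∈ faces → t ⊆ s → t ∈ faces

/-- A simplicial complex is 1-dimensional (a graph) if all faces have at most 2 vertices and
some face has exactly 2 vertices. -/
def SComplex.IsGraph {n : ℕ} (Δ : SComplex n) : Prop :=
  (∀ s ∈ Δ.faces, s.card ≤ 2) ∧ ∃ s ∈ Δ.faces, s.card = 2

/-- The Stanley–Reisner ideal of a simplicial complex. -/
noncomputable def SComplex.srIdeal {n : ℕ} (K : Type*) [Field K] (Δ : SComplex n) :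
    Ideal (MvPolynomial (Fin (n + 1)) K) :=
  Ideal.span {g | ∃ s : Finset (Fin (n + 1)), s ∉ Δ.faces ∧ g = ∏ i ∈ s, X i}

/-- The simple graph underlying a 1-dimensional simplicial complex. -/
def SComplex.graph {n : ℕ} (Δ : SComplex n) : SimpleGraph (Fin (n + 1)) :=
  SimpleGraph.fromRel fun i j => ({i, j} : Finset (Fin (n + 1))) ∈ Δ.faces

/-- The (vector representatives of the) points of the projective variety `V(I) ⊆ ℙⁿ`. -/
def projZeros {n : ℕ} {K : Type*} [Field K] (I : Ideal (MvPolynomial (Fin (n + 1)) K)) :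
    Set (Fin (n + 1) → K) :=
  {x | x ≠ 0 ∧ ∀ f ∈ I, eval x f = 0}

/-- The rank at the point `x` of the Jacobian matrix of the ideal `I`. -/
noncomputable def jacobianRank {n : ℕ} {K : Type*} [Field K]
    (I : Ideal (MvPolynomial (Fin (n + 1)) K)) (x : Fin (n + 1) → K) : ℕ :=
  Module.finrank K
    (Submodule.span K {v : Fin (n + 1) → K | ∃ f ∈ I, v = fun i => eval x (pderiv i f)})

/-- The projective variety `V(I)` is connected. -/
def IsConnectedProjVariety {n : ℕ} {K : Type*} [Field K]
    (I : Ideal (MvPolynomial (Fin (n + 1)) K)) : Prop :=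
  (projZeros I).Nonempty ∧
    ∀ J₁ J₂ : Ideal (MvPolynomial (Fin (n + 1)) K), IsHomog J₁ → IsHomog J₂ →
      projZeros I ⊆ projZeros J₁ ∪ projZeros J₂ →
      projZeros I ∩ (projZeros J₁ ∩ projZeros J₂) = ∅ →
      projZeros I ⊆ projZeros J₁ ∨ projZeros I ⊆ projZeros J₂

/-- A graph `Γ` on `{0, …, n}` is Gröbner smoothable over `K` if there are a homogeneous ideal
`J ⊆ K[X_0,…,X_n]` and a monomial order `<` with `in_<(J) = I_Γ` such that `V(J) ⊆ ℙⁿ` is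
connected and smooth over `K` (every point of `V(J)` over the algebraic closure of `K` is a
nonsingular point, via the Jacobian criterion for a curve). -/
def GroebnerSmoothable (K : Type*) [Field K] {n : ℕ} (Γ : SComplex n) : Prop :=
  ∃ J : Ideal (MvPolynomial (Fin (n + 1)) K), IsHomog J ∧
    ∃ m : MonomialOrder.{0, 0} (Fin (n + 1)), initialIdeal m J = Γ.srIdeal K ∧
      IsConnectedProjVariety (J.map (MvPolynomial.map (algebraMap K (AlgebraicClosure K)))) ∧
      ∀ x ∈ projZeros (J.map (MvPolynomial.map (algebraMap K (AlgebraicClosure K)))),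
        jacobianRank (J.map (MvPolynomial.map (algebraMap K (AlgebraicClosure K)))) x = n - 1

/-!
After base change to an algebraically closed field `k`, an injective weight `w` on the vertices
computes the initial ideal of `J`, and `J` is the prime ideal of a smooth projective curve. Every
vertex `j` that does not have the smallest weight has exactly one neighbour of smaller weight, which
forces `Γ` to be a tree.

To see this, give the coordinate `ξ l / ξ j` of the chart `X j ≠ 0` the weight `w l - w j`. The
associated graded ring of the resulting filtration is the Stanley–Reisner ring of the link of `j`,
that is, `k[x_l : l ∼ j] / (x_l x_l' : l ≠ l')`. Let `B` be the ring of elements of weight at most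
`0` and `M` its ideal of elements of negative weight. As the graded ring is reduced, `B` is
integrally closed; as the weights are distinct, `M` is maximal.

* If `j` had no neighbour of smaller weight, the graded ring would vanish in negative degrees, so
  that `M = M ^ 2`; being finitely generated, `M` would be `0` or `B`.
* Only finitely many valuation rings dominate `(B, M)`, because they come from points of the curve.
  Hence any nonzero `x, y ∈ M` satisfy `s * x ^ p = t * y ^ q` with `p ≠ 0` and `s, t ∉ M`. For the
  coordinates of two neighbours of smaller weight, the leading forms `x_i ^ p` and `x_i' ^ q` are
  linearly independent, which rules out such a relation.
-/

section Weights

lemma exists_linearMap_pos {ι R W : Type*} [Finite ι] [Field R] [LinearOrder R]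
    [IsStrictOrderedRing R] [AddCommGroup W] [Module R W] {x : W} (hx : x ≠ 0) {y : ι → W}
    {φ : W →ₗ[R] R} (hφx : φ x = 0) (hφ : ∀ i, 0 < φ (y i)) :
    ∃ ψ : W →ₗ[R] R, 0 < ψ x ∧ ∀ i, 0 < ψ (y i) := by
  cases nonempty_fintype ι
  obtain ⟨θ, hθ⟩ : ∃ θ : W →ₗ[R] R, 0 < θ x := by
    obtain ⟨θ, hθ⟩ := not_forall.1 (mt (Module.forall_dual_apply_eq_zero_iff R x).1 hx)
    rcases lt_or_gt_of_ne hθ with hneg | hpos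
    exacts [⟨-θ, by simpa using hneg⟩, ⟨θ, hpos⟩]
  obtain ⟨N, hN⟩ := (Set.finite_range fun i => -θ (y i) / φ (y i)).bddAbove
  refine ⟨θ + (N + 1) • φ, by simpa [hφx] using hθ, fun i => ?_⟩
  have hle : -θ (y i) ≤ N * φ (y i) := (div_le_iff₀ (hφ i)).1 (hN ⟨i, rfl⟩)
  simp only [LinearMap.add_apply, LinearMap.smul_apply, smul_eq_mul]
  linarith [hφ i]

/- Gordan's theorem, by induction on the number of vectors: project along the first vector `d 0`.
If the projected vectors satisfy a nontrivial nonnegative relation, then `d 0` is a nonnegative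
combination of the others and can be dropped. -/
theorem exists_linearMap_forall_pos_fin {R : Type*} [Field R] [LinearOrder R]
    [IsStrictOrderedRing R] {m : ℕ} :
    ∀ {W : Type*} [AddCommGroup W] [Module R W] (d : Fin m → W)
      (_ : ∀ c : Fin m → R, 0 ≤ c → ∑ i, c i • d i = 0 → c = 0),
      ∃ φ : W →ₗ[R] R, ∀ i, 0 < φ (d i) := by
  induction m with
  | zero => exact fun _ _ => ⟨0, fun i => i.elim0⟩
  | succ m ih =>
    intro W _ _ d hd
    have hcons (t : R) (c : Fin m → R) (ht : 0 ≤ t) (hc : 0 ≤ c)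
        (hsum : t • d 0 + ∑ i, c i • d i.succ = 0) : t = 0 ∧ c = 0 := by
      have h := hd (Fin.cons t c) (Fin.cases ht hc) (by simpa [Fin.sum_univ_succ] using hsum)
      exact ⟨congrFun h 0, funext fun i => congrFun h i.succ⟩
    let π := (Submodule.span R {d 0}).mkQ
    have hπ : π (d 0) = 0 := by simp [π]
    by_cases hq : ∀ c : Fin m → R, 0 ≤ c → ∑ i, c i • π (d i.succ) = 0 → c = 0
    · obtain ⟨φ, hφ⟩ := ih _ hq
      have hd0 : d 0 ≠ 0 := fun h0 =>
        one_ne_zero (hcons 1 0 zero_le_one le_rfl (by simp [h0])).1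
      obtain ⟨ψ, hψ0, hψ⟩ := exists_linearMap_pos hd0 (φ := φ ∘ₗ π) (by simp [hπ]) hφ
      exact ⟨ψ, Fin.cases hψ0 hψ⟩
    · push Not at hq
      obtain ⟨c, hc0, hc, hne⟩ := hq
      obtain ⟨t, ht⟩ : ∃ t : R, t • d 0 = ∑ i, c i • d i.succ := by
        rw [← Submodule.mem_span_singleton, ← Submodule.ker_mkQ (Submodule.span R {d 0}),
          LinearMap.mem_ker]
        simpa [π] using hc
      have ht0 : 0 < t := by
        by_contra! hneg
        exact hne (hcons (-t) c (neg_nonneg.2 hneg) hc0 (by simp [ht])).2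
      obtain ⟨φ, hφ⟩ := ih (fun i => d i.succ)
        fun c hc hsum => (hcons 0 c le_rfl hc (by simpa using hsum)).2
      refine ⟨φ, Fin.cases ?_ hφ⟩
      obtain ⟨i, hi⟩ : ∃ i, c i ≠ 0 := Function.ne_iff.1 hne
      have hpos : 0 < ∑ i, c i * φ (d i.succ) :=
        Finset.sum_pos' (fun i _ => mul_nonneg (hc0 i) (hφ i).le)
          ⟨i, Finset.mem_univ i, mul_pos (lt_of_le_of_ne (hc0 i) hi.symm) (hφ i)⟩
      have heq : t * φ (d 0) = ∑ i, c i * φ (d i.succ) := by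
        simpa using congrArg φ ht
      exact (mul_pos_iff_of_pos_left ht0).1 (heq ▸ hpos)

theorem exists_linearMap_forall_pos {ι R W : Type*} [Fintype ι] [Field R] [LinearOrder R]
    [IsStrictOrderedRing R] [AddCommGroup W] [Module R W] (d : ι → W)
    (hd : ∀ c : ι → R, 0 ≤ c → ∑ i, c i • d i = 0 → c = 0) :
    ∃ φ : W →ₗ[R] R, ∀ i, 0 < φ (d i) := by
  let e := Fintype.equivFin ι
  obtain ⟨φ, hφ⟩ := exists_linearMap_forall_pos_fin (d ∘ e.symm) fun c hc hsum => by
    have h := hd (c ∘ e) (fun i => hc (e i)) (by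
      rw [← hsum, ← e.sum_comp]
      simp)
    exact funext fun i => by simpa using congrFun h (e.symm i)
  exact ⟨φ, fun i => by simpa using hφ (e i)⟩

lemma exists_pos_nat_mul_eq_natCast {ι : Type*} [Finite ι] {c : ι → ℚ} (hc : 0 ≤ c) :
    ∃ M : ℕ, 0 < M ∧ ∃ k : ι → ℕ, ∀ i, (k i : ℚ) = M * c i := by
  cases nonempty_fintype ι
  have hmul (i) : ∃ k : ℕ, (k : ℚ) = (∏ i, (c i).den : ℕ) * c i := by
    obtain ⟨q, hq⟩ := Finset.dvd_prod_of_mem (fun i => (c i).den) (Finset.mem_univ i)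
    obtain ⟨a, ha⟩ := Int.eq_ofNat_of_zero_le (Rat.num_nonneg.2 (hc i))
    have hnum : c i * (c i).den = a := by rw [Rat.mul_den_eq_num, ha, Int.cast_natCast]
    refine ⟨q * a, ?_⟩
    rw [hq, Nat.cast_mul, Nat.cast_mul, ← hnum]
    ring
  exact ⟨_, Finset.prod_pos fun i _ => (c i).den_pos, Classical.skolem.1 hmul⟩

/-- The exponent vector `b` with its entries regarded as rational numbers. -/
def ratVec {σ : Type*} (b : σ →₀ ℕ) : σ → ℚ := fun i => b i

lemma eq_zero_of_sum_smul_ratVec_sub_eq_zero {σ ι : Type*} [Fintype ι] (m : MonomialOrder σ)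
    {a b : ι → σ →₀ ℕ} (hab : ∀ i, m.toSyn (a i) < m.toSyn (b i)) {c : ι → ℚ} (hc : 0 ≤ c)
    (hsum : ∑ i, c i • (ratVec (b i) - ratVec (a i)) = 0) : c = 0 := by
  obtain ⟨M, hM, k, hk⟩ := exists_pos_nat_mul_eq_natCast hc
  have hM0 : (M : ℚ) ≠ 0 := by positivity
  have heq : ∑ i, k i • b i = ∑ i, k i • a i := by
    ext l
    have hl : ∑ i, (M : ℚ) * (c i * (b i l - a i l)) = 0 := by
      rw [← Finset.mul_sum]
      simpa [ratVec, hM0] using congrFun hsum l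
    simp only [← mul_assoc, ← hk, mul_sub, Finset.sum_sub_distrib, sub_eq_zero] at hl
    simpa [Finsupp.finsetSum_apply] using (mod_cast hl : ∑ i, k i * b i l = ∑ i, k i * a i l)
  by_contra hne
  obtain ⟨i, hi⟩ := Function.ne_iff.1 hne
  have hki : k i ≠ 0 := fun h0 => hi (by simpa [h0, hM0] using (hk i).symm)
  have hlt : ∑ i, k i • m.toSyn (a i) < ∑ i, k i • m.toSyn (b i) :=
    Finset.sum_lt_sum (fun i _ => nsmul_le_nsmul_right (hab i).le _)
      ⟨i, Finset.mem_univ i, nsmul_lt_nsmul_right hki (hab i)⟩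
  simp only [← map_nsmul, ← map_sum, heq, lt_irrefl] at hlt

lemma exists_linearMap_ratVec_lt {σ ι : Type*} [Finite ι] (m : MonomialOrder σ)
    {a b : ι → σ →₀ ℕ} (hab : ∀ i, m.toSyn (a i) < m.toSyn (b i)) :
    ∃ φ : (σ → ℚ) →ₗ[ℚ] ℚ, ∀ i, φ (ratVec (a i)) < φ (ratVec (b i)) := by
  cases nonempty_fintype ι
  obtain ⟨φ, hφ⟩ := exists_linearMap_forall_pos (fun i => ratVec (b i) - ratVec (a i))
    fun c hc hsum => eq_zero_of_sum_smul_ratVec_sub_eq_zero m hab hc hsum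
  exact ⟨φ, fun i => by simpa using hφ i⟩

theorem exists_weight_lt {σ ι : Type*} [Finite σ] [Finite ι] (m : MonomialOrder σ)
    {a b : ι → σ →₀ ℕ} (hab : ∀ i, m.toSyn (a i) < m.toSyn (b i)) :
    ∃ w : σ → ℕ, ∀ i, Finsupp.weight w (a i) < Finsupp.weight w (b i) := by
  classical
  cases nonempty_fintype σ
  -- The extra inequalities `0 < single l 1` force the weights to be positive.
  obtain ⟨φ, hφ⟩ := exists_linearMap_ratVec_lt m (ι := ι ⊕ σ) (a := Sum.elim a 0)
    (b := Sum.elim b fun l => Finsupp.single l 1) (by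
      rintro (i | l)
      · exact hab i
      · simp [m.toSyn_lt_iff_ne_zero])
  have hφ0 : φ (ratVec 0) = 0 := map_zero φ ▸ congrArg φ (funext fun _ => Nat.cast_zero)
  obtain ⟨M, hM, w, hw⟩ := exists_pos_nat_mul_eq_natCast
    (c := fun l => φ (ratVec (Finsupp.single l 1)))
    (fun l => by simpa [hφ0] using (hφ (Sum.inr l)).le)
  have hweight (e : σ →₀ ℕ) : ((Finsupp.weight w e : ℕ) : ℚ) = M * φ (ratVec e) := by
    have he : ratVec e = ∑ l, (e l : ℚ) • ratVec (Finsupp.single l 1) := by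
      ext l
      simp [ratVec, Finset.sum_apply, Finsupp.single_apply]
    rw [he, map_sum, Finset.mul_sum, Finsupp.weight_apply, Finsupp.sum_fintype _ _ (by simp)]
    push_cast
    refine Finset.sum_congr rfl fun l _ => ?_
    rw [smul_eq_mul, Nat.cast_mul, hw, map_smul, smul_eq_mul]
    ring
  refine ⟨w, fun i => ?_⟩
  have hlt : (M : ℚ) * φ (ratVec (a i)) < M * φ (ratVec (b i)) :=
    mul_lt_mul_of_pos_left (hφ (Sum.inl i)) (by exact_mod_cast hM)
  rw [← hweight, ← hweight] at hlt
  exact_mod_cast hlt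

end Weights

section SquarefreeMonomials

variable {σ : Type*}

/-- The exponent vector of the squarefree monomial `∏ i ∈ s, X i`. -/
noncomputable def sqfreeExp (s : Finset σ) : σ →₀ ℕ := ∑ i ∈ s, Finsupp.single i 1

lemma sqfreeExp_apply [DecidableEq σ] (s : Finset σ) (i : σ) :
    sqfreeExp s i = if i ∈ s then 1 else 0 := by
  simp [sqfreeExp, Finsupp.finsetSum_apply, Finsupp.single_apply]

lemma degree_sqfreeExp (s : Finset σ) : (sqfreeExp s).degree = s.card := by
  simp [sqfreeExp, map_sum]

lemma sqfreeExp_le_iff {s : Finset σ} {b : σ →₀ ℕ} : sqfreeExp s ≤ b ↔ s ⊆ b.support := by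
  classical
  refine ⟨fun h i hi => ?_, fun h i => ?_⟩
  · have := h i
    rw [sqfreeExp_apply, if_pos hi] at this
    exact Finsupp.mem_support_iff.2 (by lia)
  · rw [sqfreeExp_apply]
    split_ifs with hi
    exacts [Nat.one_le_iff_ne_zero.2 (Finsupp.mem_support_iff.1 (h hi)), Nat.zero_le _]

lemma monomial_sqfreeExp {R : Type*} [CommSemiring R] (s : Finset σ) :
    monomial (sqfreeExp s) (1 : R) = ∏ i ∈ s, X i := by
  simp only [sqfreeExp, X, monomial_sum_one]

end SquarefreeMonomials

section InitialIdeal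

variable {n : ℕ} {K : Type*} [Field K] {Γ : SComplex n} {m : MonomialOrder.{0, 0} (Fin (n + 1))}
  {J : Ideal (MvPolynomial (Fin (n + 1)) K)}

lemma srIdeal_eq_span_monomial_image : Γ.srIdeal K =
    Ideal.span ((fun b => monomial b (1 : K)) '' (sqfreeExp '' {s | s ∉ Γ.faces})) := by
  simp [SComplex.srIdeal, monomial_sqfreeExp, Set.image, eq_comm]

lemma monomial_mem_srIdeal_iff {b : Fin (n + 1) →₀ ℕ} :
    monomial b (1 : K) ∈ Γ.srIdeal K ↔ b.support ∉ Γ.faces := by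
  classical
  rw [srIdeal_eq_span_monomial_image, mem_ideal_span_monomial_image]
  simp only [mem_support_iff, coeff_monomial, ite_ne_right_iff, one_ne_zero, ne_eq,
    not_false_eq_true, and_true, forall_eq', Set.exists_mem_image, sqfreeExp_le_iff,
    Set.mem_ofPred_eq]
  exact ⟨fun ⟨_, hs, hsb⟩ hb => hs (Γ.down_closed hb hsb), fun hb => ⟨_, hb, subset_rfl⟩⟩

lemma initialIdeal_eq_span_monomial_image : initialIdeal m J =
    Ideal.span ((fun b => monomial b (1 : K)) '' (m.degree '' {f | f ∈ J ∧ f ≠ 0})) := by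
  simp only [initialIdeal, Set.image_image]
  congr 1
  ext g
  simp [MonomialOrder.mdeg, MonomialOrder.degree, and_assoc, eq_comm]

lemma monomial_mem_initialIdeal_iff {b : Fin (n + 1) →₀ ℕ} :
    monomial b (1 : K) ∈ initialIdeal m J ↔ ∃ f ∈ J, f ≠ 0 ∧ m.degree f ≤ b := by
  rw [initialIdeal_eq_span_monomial_image, mem_ideal_span_monomial_image]
  simp [and_assoc]

lemma support_degree_notMem_faces (hin : initialIdeal m J = Γ.srIdeal K)
    {f : MvPolynomial (Fin (n + 1)) K} (hf : f ∈ J) (hf0 : f ≠ 0) :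
    (m.degree f).support ∉ Γ.faces := by
  rw [← monomial_mem_srIdeal_iff (K := K), ← hin, monomial_mem_initialIdeal_iff]
  exact ⟨f, hf, hf0, le_rfl⟩

lemma eq_zero_of_support_subset_faces (hin : initialIdeal m J = Γ.srIdeal K)
    {f : MvPolynomial (Fin (n + 1)) K} (hf : f ∈ J)
    (hstd : ∀ b ∈ f.support, b.support ∈ Γ.faces) : f = 0 := by
  by_contra hf0
  exact support_degree_notMem_faces hin hf hf0 (hstd _ (m.degree_mem_support hf0))

lemma exists_mem_degree_eq (hin : initialIdeal m J = Γ.srIdeal K) {b : Fin (n + 1) →₀ ℕ}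
    (hb : b.support ∉ Γ.faces) : ∃ f ∈ J, m.Monic f ∧ m.degree f = b := by
  classical
  rw [← monomial_mem_srIdeal_iff (K := K), ← hin, monomial_mem_initialIdeal_iff] at hb
  obtain ⟨f, hf, hf0, hle⟩ := hb
  have hlc : m.leadingCoeff f ≠ 0 := m.leadingCoeff_ne_zero_iff.2 hf0
  have hc : (m.leadingCoeff f)⁻¹ ≠ 0 := inv_ne_zero hlc
  refine ⟨monomial (b - m.degree f) (m.leadingCoeff f)⁻¹ * f, J.mul_mem_left _ hf, ?_, ?_⟩
  · rw [MonomialOrder.Monic, m.leadingCoeff_mul, m.leadingCoeff_monomial, inv_mul_cancel₀ hlc]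
  · rw [m.degree_mul (by simpa using hc) hf0, m.degree_monomial, if_neg hc,
      tsub_add_cancel_of_le hle]

lemma exists_sub_mem_of_notMem_faces (hin : initialIdeal m J = Γ.srIdeal K) (hhom : IsHomog J)
    {s : Finset (Fin (n + 1))} (hs : s ∉ Γ.faces) :
    ∃ g : MvPolynomial (Fin (n + 1)) K, monomial (sqfreeExp s) 1 - g ∈ J ∧
      ∀ b ∈ g.support, b.degree = s.card ∧ m.toSyn b < m.toSyn (sqfreeExp s) := by
  have hsupp : (sqfreeExp s).support = s := by
    classical
    ext i
    simp [sqfreeExp_apply]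
  obtain ⟨f, hf, hmonic, hdeg⟩ := exists_mem_degree_eq hin (b := sqfreeExp s) (by rwa [hsupp])
  refine ⟨monomial (sqfreeExp s) 1 - homogeneousComponent s.card f,
    by simpa using hhom f hf s.card, fun b hb => ?_⟩
  classical
  rw [mem_support_iff, coeff_sub, coeff_monomial, coeff_homogeneousComponent] at hb
  have hcoeff : coeff (sqfreeExp s) f = 1 := by rw [← hdeg]; exact hmonic
  rcases eq_or_ne (sqfreeExp s) b with rfl | hne
  · simp [degree_sqfreeExp, hcoeff] at hb
  · rw [if_neg hne, zero_sub, neg_ne_zero, ite_ne_right_iff] at hb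
    exact ⟨hb.1, ((m.le_degree (mem_support_iff.2 hb.2)).trans_eq (by rw [hdeg])).lt_of_ne
      fun h => hne (m.toSyn.injective h).symm⟩

end InitialIdeal

section BaseChange

variable {σ K k : Type*} [Field K] [Field k] [Algebra K k] {J : Ideal (MvPolynomial σ K)}

lemma exists_mem_coeff_eq_of_mem_map {F : MvPolynomial σ k}
    (hF : F ∈ J.map (MvPolynomial.map (algebraMap K k))) :
    ∀ φ : k →ₗ[K] K, ∃ G ∈ J, ∀ b, coeff b G = φ (coeff b F) := by
  classical
  induction hF using Submodule.span_induction with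
  | mem _ hf =>
    obtain ⟨f, hf, rfl⟩ := hf
    refine fun φ => ⟨C (φ 1) * f, J.mul_mem_left _ hf, fun b => ?_⟩
    have hcoeff : coeff b (MvPolynomial.map (algebraMap K k) f) = coeff b f • (1 : k) := by
      rw [coeff_map, Algebra.algebraMap_eq_smul_one]
    rw [coeff_C_mul, mul_comm, ← smul_eq_mul, ← map_smul, ← hcoeff]
  | zero => exact fun φ => ⟨0, J.zero_mem, by simp⟩
  | add F F' _ _ hF hF' =>
    intro φ
    obtain ⟨G, hG, hGF⟩ := hF φ
    obtain ⟨G', hG', hGF'⟩ := hF' φ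
    exact ⟨G + G', J.add_mem hG hG', by simp [hGF, hGF']⟩
  | smul a F _ hF =>
    induction a using MvPolynomial.induction_on' with
    | monomial e c =>
      intro φ
      obtain ⟨G, hG, hGF⟩ := hF (φ ∘ₗ LinearMap.mulLeft K c)
      refine ⟨monomial e 1 * G, J.mul_mem_left _ hG, fun b => ?_⟩
      rw [smul_eq_mul, coeff_monomial_mul', coeff_monomial_mul']
      split_ifs <;> simp [hGF]
    | add p q hp hq =>
      intro φ
      obtain ⟨G, hG, hGF⟩ := hp φ
      obtain ⟨G', hG', hGF'⟩ := hq φ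
      exact ⟨G + G', J.add_mem hG hG', fun b => by
        simpa [add_mul] using congrArg₂ (· + ·) (hGF b) (hGF' b)⟩

lemma exists_mem_degree_eq_of_mem_map (m : MonomialOrder σ) {F : MvPolynomial σ k}
    (hF : F ∈ J.map (MvPolynomial.map (algebraMap K k))) (hF0 : F ≠ 0) :
    ∃ G ∈ J, G ≠ 0 ∧ m.degree G = m.degree F := by
  have hlc : m.leadingCoeff F ≠ 0 := m.leadingCoeff_ne_zero_iff.2 hF0
  obtain ⟨φ, hφ⟩ := not_forall.1 (mt (Module.forall_dual_apply_eq_zero_iff K _).1 hlc)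
  obtain ⟨G, hG, hcoeff⟩ := exists_mem_coeff_eq_of_mem_map hF φ
  have htop : coeff (m.degree F) G ≠ 0 := by rwa [hcoeff]
  refine ⟨G, hG, fun h0 => htop (by simp [h0]), m.toSyn.injective (le_antisymm ?_ ?_)⟩
  · refine m.degree_le_iff.2 fun b hb => m.le_degree (mem_support_iff.2 fun h0 => ?_)
    exact mem_support_iff.1 hb (by rw [hcoeff, h0, map_zero])
  · exact m.le_degree (mem_support_iff.2 htop)

lemma isHomog_span {s : Set (MvPolynomial σ K)} (hs : ∀ f ∈ s, ∃ d, f.IsHomogeneous d) :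
    IsHomog (Ideal.span s) := fun _ hf d =>
  letI := gradedAlgebra (σ := σ) (R := K)
  homogeneousComponent_mem_of_mem (Ideal.homogeneous_span _ s hs) hf d

lemma IsHomog.le_of_forall_isHomogeneous (hJ : IsHomog J) {I : Ideal (MvPolynomial σ K)}
    (h : ∀ f ∈ J, ∀ d, f.IsHomogeneous d → f ∈ I) : J ≤ I := fun f hf => by
  rw [← sum_homogeneousComponent f]
  exact I.sum_mem fun d _ => h _ (hJ f hf d) d (homogeneousComponent_isHomogeneous d f)

lemma IsHomog.map (hJ : IsHomog J) : IsHomog (J.map (MvPolynomial.map (algebraMap K k))) := by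
  have hspan : J = Ideal.span {f | f ∈ J ∧ ∃ d, f.IsHomogeneous d} := le_antisymm
    (hJ.le_of_forall_isHomogeneous fun f hf d hd => Ideal.subset_span ⟨hf, d, hd⟩)
    (Ideal.span_le.2 fun f hf => hf.1)
  rw [hspan, Ideal.map_span]
  refine isHomog_span ?_
  rintro _ ⟨f, ⟨-, d, hd⟩, rfl⟩
  exact ⟨d, hd.map _⟩

theorem initialIdeal_map_eq_srIdeal {n : ℕ} {m : MonomialOrder.{0, 0} (Fin (n + 1))}
    {J : Ideal (MvPolynomial (Fin (n + 1)) K)} {Γ : SComplex n}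
    (hin : initialIdeal m J = Γ.srIdeal K) :
    initialIdeal m (J.map (MvPolynomial.map (algebraMap K k))) = Γ.srIdeal k := by
  have hinj : Function.Injective (algebraMap K k) := (algebraMap K k).injective
  apply le_antisymm
  · rw [initialIdeal_eq_span_monomial_image, Ideal.span_le]
    rintro _ ⟨_, ⟨F, ⟨hF, hF0⟩, rfl⟩, rfl⟩
    obtain ⟨G, hG, hG0, hdeg⟩ := exists_mem_degree_eq_of_mem_map m hF hF0
    exact monomial_mem_srIdeal_iff.2 (hdeg ▸ support_degree_notMem_faces hin hG hG0)
  · rw [SComplex.srIdeal, Ideal.span_le]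
    rintro _ ⟨s, hs, rfl⟩
    have hmem : monomial (sqfreeExp s) (1 : K) ∈ initialIdeal m J := by
      rw [hin, monomial_sqfreeExp]
      exact Ideal.subset_span ⟨s, hs, rfl⟩
    obtain ⟨f, hf, hf0, hle⟩ := monomial_mem_initialIdeal_iff.1 hmem
    rw [SetLike.mem_coe, ← monomial_sqfreeExp]
    refine monomial_mem_initialIdeal_iff.2 ⟨_, Ideal.mem_map_of_mem _ hf,
      (map_ne_zero_iff _ (map_injective _ hinj)).2 hf0, ?_⟩
    rwa [MonomialOrder.degree, support_map_of_injective _ hinj]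

end BaseChange

section WeightDegeneration

variable {n : ℕ} {k : Type*} [Field k] {Γ : SComplex n}
  {J : Ideal (MvPolynomial (Fin (n + 1)) k)} {w : Fin (n + 1) → ℕ}

/-- The weight `w` degenerates the ideal `J` to the Stanley–Reisner ideal of `Γ`: every monomial
whose support is not a face is congruent modulo `J` to a form of the same degree and of smaller
weight, and no nonzero element of `J` is a combination of monomials supported on faces. The
vertices have pairwise distinct weights. -/
structure IsWeightDegeneration (Γ : SComplex n) (J : Ideal (MvPolynomial (Fin (n + 1)) k))
    (w : Fin (n + 1) → ℕ) : Prop where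
  weight_injective : Function.Injective w
  exists_sub_mem {b : Fin (n + 1) →₀ ℕ} (hb : b.support ∉ Γ.faces) :
    ∃ g : MvPolynomial (Fin (n + 1)) k, monomial b 1 - g ∈ J ∧
      ∀ c ∈ g.support, c.degree = b.degree ∧ Finsupp.weight w c < Finsupp.weight w b
  eq_zero_of_mem {f : MvPolynomial (Fin (n + 1)) k} (hf : f ∈ J)
    (hstd : ∀ b ∈ f.support, b.support ∈ Γ.faces) : f = 0

lemma exists_monomial_sub_mem
    (h : ∀ s ∉ Γ.faces, ∃ g : MvPolynomial (Fin (n + 1)) k, monomial (sqfreeExp s) 1 - g ∈ J ∧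
      ∀ c ∈ g.support, c.degree = s.card ∧ Finsupp.weight w c < Finsupp.weight w (sqfreeExp s))
    {b : Fin (n + 1) →₀ ℕ} (hb : b.support ∉ Γ.faces) :
    ∃ g : MvPolynomial (Fin (n + 1)) k, monomial b 1 - g ∈ J ∧
      ∀ c ∈ g.support, c.degree = b.degree ∧ Finsupp.weight w c < Finsupp.weight w b := by
  obtain ⟨g, hgJ, hg⟩ := h _ hb
  obtain ⟨u, hu⟩ := exists_add_of_le (sqfreeExp_le_iff.2 (subset_refl b.support))
  refine ⟨monomial u 1 * g, ?_, fun c hc => ?_⟩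
  · have hmul : monomial b (1 : k) = monomial u 1 * monomial (sqfreeExp b.support) 1 := by
      rw [monomial_mul, one_mul, add_comm u, ← hu]
    rw [hmul, ← mul_sub]
    exact J.mul_mem_left _ hgJ
  · classical
    rw [mem_support_iff, coeff_monomial_mul', ite_ne_right_iff, one_mul] at hc
    obtain ⟨c, rfl⟩ := exists_add_of_le hc.1
    rw [add_tsub_cancel_left, ← mem_support_iff] at hc
    obtain ⟨hdeg, hlt⟩ := hg c hc.2
    rw [hu, add_comm (sqfreeExp _), map_add, map_add, map_add, map_add, degree_sqfreeExp]
    exact ⟨congrArg _ hdeg, Nat.add_lt_add_left hlt _⟩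

theorem exists_isWeightDegeneration {m : MonomialOrder.{0, 0} (Fin (n + 1))}
    (hin : initialIdeal m J = Γ.srIdeal k) (hhom : IsHomog J) :
    ∃ w : Fin (n + 1) → ℕ, IsWeightDegeneration Γ J w := by
  choose! g hgJ hg using fun s hs => exists_sub_mem_of_notMem_faces hin hhom (s := s) hs
  let e (i : Fin (n + 1)) : Fin (n + 1) →₀ ℕ := Finsupp.single i 1
  let ι := (Σ s : {s // s ∉ Γ.faces}, (g s).support) ⊕
    {p : Fin (n + 1) × Fin (n + 1) // m.toSyn (e p.1) < m.toSyn (e p.2)}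
  obtain ⟨w, hw⟩ := exists_weight_lt (ι := ι) m
    (a := Sum.elim (fun q => q.2) fun p => e p.1.1)
    (b := Sum.elim (fun q => sqfreeExp q.1) fun p => e p.1.2)
    (Sum.rec (fun q => (hg q.1 q.1.2 q.2 q.2.2).2) fun p => p.2)
  refine ⟨w, ?_, exists_monomial_sub_mem fun s hs => ⟨g s, hgJ s hs, fun b hb =>
    ⟨(hg s hs b hb).1, hw (Sum.inl ⟨⟨s, hs⟩, ⟨b, hb⟩⟩)⟩⟩, eq_zero_of_support_subset_faces hin⟩
  have hlt {i l} (h : m.toSyn (e i) < m.toSyn (e l)) : w i < w l := by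
    simpa [e, Finsupp.weight_single] using hw (Sum.inr ⟨(i, l), h⟩)
  intro i l hil
  by_contra hne
  have hne' : m.toSyn (e i) ≠ m.toSyn (e l) := fun h =>
    hne (Finsupp.single_left_injective one_ne_zero (m.toSyn.injective h))
  rcases hne'.lt_or_gt with h | h
  exacts [(hlt h).ne hil, (hlt h).ne' hil]

namespace IsWeightDegeneration

variable (hw : IsWeightDegeneration Γ J w)
include hw

theorem restrictSupport_weight_lt_le (T : ℕ) :
    restrictSupport k {b | Finsupp.weight w b < T} ≤ J.restrictScalars k ⊔
      restrictSupport k {b | b.support ∈ Γ.faces ∧ Finsupp.weight w b < T} := by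
  induction T with
  | zero => simp [restrictSupport_eq_span]
  | succ T ih =>
    rw [restrictSupport_eq_span, Submodule.span_le]
    rintro _ ⟨b, hb, rfl⟩
    change monomial b (1 : k) ∈ _
    by_cases hface : b.support ∈ Γ.faces
    · exact Submodule.mem_sup_right ((monomial_mem_restrictSupport k).2 (.inl ⟨hface, hb⟩))
    obtain ⟨g, hgJ, hg⟩ := hw.exists_sub_mem hface
    have hgT : g ∈ restrictSupport k {b | Finsupp.weight w b < T} := fun c hc =>
      (hg c hc).2.trans_le (Nat.lt_succ_iff.1 hb)
    rw [← sub_add_cancel (monomial b (1 : k)) g]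
    refine add_mem (Submodule.mem_sup_left hgJ)
      (sup_le_sup_left (restrictSupport_mono k ?_) _ (ih hgT))
    exact fun c hc => ⟨hc.1, hc.2.trans T.lt_succ_self⟩

lemma exists_sub_mem_of_weight_lt {f : MvPolynomial (Fin (n + 1)) k} {T : ℕ}
    (hf : ∀ b ∈ f.support, Finsupp.weight w b < T) :
    ∃ g, f - g ∈ J ∧ ∀ b ∈ g.support, b.support ∈ Γ.faces ∧ Finsupp.weight w b < T := by
  obtain ⟨h, hh, g, hg, rfl⟩ := Submodule.mem_sup.1
    (hw.restrictSupport_weight_lt_le T ((mem_restrictSupport_iff k).2 hf))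
  exact ⟨g, by simpa using hh, hg⟩

lemma eq_zero_of_sub_mem {T : ℕ} {f g : MvPolynomial (Fin (n + 1)) k} (hfg : f - g ∈ J)
    (hf : ∀ b ∈ f.support, b.support ∈ Γ.faces ∧ T ≤ Finsupp.weight w b)
    (hg : ∀ b ∈ g.support, Finsupp.weight w b < T) : f = 0 := by
  classical
  obtain ⟨h, hgh, hh⟩ := hw.exists_sub_mem_of_weight_lt hg
  have hfh : f - h = 0 := hw.eq_zero_of_mem (by simpa using J.add_mem hfg hgh) fun b hb =>
    (Finset.mem_union.1 (support_sub _ _ _ hb)).elim (fun hb => (hf b hb).1) fun hb => (hh b hb).1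
  rw [sub_eq_zero] at hfh
  refine support_eq_empty.1 (Finset.eq_empty_of_forall_notMem fun b hb => ?_)
  exact ((hf b hb).2.trans_lt (hh b (hfh ▸ hb)).2).false

lemma X_notMem {i : Fin (n + 1)} (hi : {i} ∈ Γ.faces) : X i ∉ J := fun h =>
  X_ne_zero i (hw.eq_zero_of_mem h fun b hb => by
    rw [support_X, Finset.mem_singleton] at hb
    simpa [hb] using hi)

theorem isRadical {m : MonomialOrder.{0, 0} (Fin (n + 1))}
    (hin : initialIdeal m J = Γ.srIdeal k) : J.IsRadical := by
  rintro f ⟨N, hN⟩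
  obtain ⟨T, hT⟩ := (f.support.finite_toSet.image (Finsupp.weight w)).bddAbove
  obtain ⟨g, hfg, hg⟩ := hw.exists_sub_mem_of_weight_lt (f := f) (T := T + 1) fun b hb =>
    Nat.lt_succ_iff.2 (hT ⟨b, hb, rfl⟩)
  suffices g = 0 by simpa [this] using hfg
  by_contra hg0
  have hgN : g ^ N ∈ J := by
    rw [← Ideal.Quotient.eq_zero_iff_mem, map_pow, ← (Ideal.Quotient.eq.2 hfg), ← map_pow]
    exact Ideal.Quotient.eq_zero_iff_mem.2 hN
  refine support_degree_notMem_faces hin hgN (pow_ne_zero N hg0) ?_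
  rw [m.degree_pow]
  exact Γ.down_closed (hg _ (m.degree_mem_support hg0)).1 Finsupp.support_smul

end IsWeightDegeneration

end WeightDegeneration

section LocalAlgebra

variable {A : Type*} [CommRing A]

theorem isDomain_of_isPrincipal_maximalIdeal [IsLocalRing A] [IsNoetherianRing A] [IsReduced A]
    (h : (IsLocalRing.maximalIdeal A).IsPrincipal) : IsDomain A := by
  obtain ⟨z, hz⟩ := h
  have hunit (a : A) : IsUnit a ↔ ¬ z ∣ a := by
    rw [← Ideal.mem_span_singleton, ← Ideal.submodule_span_eq, ← hz, IsLocalRing.mem_maximalIdeal,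
      mem_nonunits_iff, not_not]
  have hfinite {a : A} (ha : a ≠ 0) : FiniteMultiplicity z a := by
    by_contra hfin
    have hmem : a ∈ ⨅ e : ℕ, IsLocalRing.maximalIdeal A ^ e := by
      simp only [Submodule.mem_iInf, hz, Ideal.submodule_span_eq, Ideal.span_singleton_pow,
        Ideal.mem_span_singleton]
      exact FiniteMultiplicity.not_iff_forall.1 hfin
    rw [Ideal.iInf_pow_eq_bot_of_isLocalRing _ Ideal.IsPrime.ne_top'] at hmem
    exact ha hmem
  have : NoZeroDivisors A := by
    refine ⟨fun {a b} hab => ?_⟩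
    by_contra! hne
    obtain ⟨u, ha, hu⟩ := (hfinite hne.1).exists_eq_pow_mul_and_not_dvd
    obtain ⟨v, hb, hv⟩ := (hfinite hne.2).exists_eq_pow_mul_and_not_dvd
    have huv : IsUnit (u * v) := ((hunit u).2 hu).mul ((hunit v).2 hv)
    have hpow : z ^ (multiplicity z a + multiplicity z b) = 0 := by
      rw [← huv.mul_left_eq_zero, pow_add, mul_mul_mul_comm, ← ha, ← hb, hab]
    have hz0 : z = 0 := eq_zero_of_pow_eq_zero hpow
    have ha_unit : IsUnit a := (hunit a).2 (by simpa only [hz0, zero_dvd_iff] using hne.1)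
    exact hne.2 (ha_unit.mul_right_eq_zero.1 hab)
  exact NoZeroDivisors.to_isDomain A

theorem isPrincipal_maximalIdeal_localization [IsNoetherianRing A] {m : Ideal A} [m.IsMaximal]
    {z : A} (hzm : z ∈ m) (hz : m ≤ Ideal.span {z} ⊔ m ^ 2) :
    (IsLocalRing.maximalIdeal (Localization.AtPrime m)).IsPrincipal := by
  have hmap : m.map (algebraMap A (Localization.AtPrime m)) = IsLocalRing.maximalIdeal _ :=
    Localization.AtPrime.map_eq_maximalIdeal
  have : IsNoetherianRing (Localization.AtPrime m) :=
    IsLocalization.isNoetherianRing m.primeCompl _ inferInstance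
  refine ⟨algebraMap A _ z, le_antisymm ?_ ?_⟩
  · apply Submodule.le_of_le_smul_of_le_jacobson_bot (IsNoetherian.noetherian _)
      (IsLocalRing.jacobson_eq_maximalIdeal _ bot_ne_top).ge
    have hz' := Ideal.map_mono (f := algebraMap A (Localization.AtPrime m)) hz
    rwa [Ideal.map_sup, Ideal.map_pow, hmap, Ideal.map_span, Set.image_singleton, pow_two] at hz'
  · rw [← hmap, Ideal.submodule_span_eq, Ideal.span_singleton_le_iff_mem]
    exact Ideal.mem_map_of_mem _ hzm

theorem exists_notMem_mul_eq_zero_of_mul_eq_zero {P : Ideal A} [P.IsPrime]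
    [IsDomain (Localization.AtPrime P)] {a b : A} (hab : a * b = 0) :
    ∃ s ∉ P, s * a = 0 ∨ s * b = 0 := by
  have hlocal : algebraMap A (Localization.AtPrime P) a * algebraMap A _ b = 0 := by
    rw [← map_mul, hab, map_zero]
  rcases mul_eq_zero.1 hlocal with h | h <;>
  obtain ⟨s, hs⟩ := (IsLocalization.map_eq_zero_iff P.primeCompl _ _).1 h
  exacts [⟨s, s.2, .inl hs⟩, ⟨s, s.2, .inr hs⟩]

theorem isDedekindDomain_of_isPrincipal_maximalIdeal_localization [IsDomain A] [IsNoetherianRing A]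
    (h : ∀ (m : Ideal A) [m.IsMaximal],
      (IsLocalRing.maximalIdeal (Localization.AtPrime m)).IsPrincipal) :
    IsDedekindDomain A := by
  have hlocal (m : Ideal A) [m.IsMaximal] : IsDedekindDomain (Localization.AtPrime m) := by
    have : IsNoetherianRing (Localization.AtPrime m) :=
      IsLocalization.isNoetherianRing m.primeCompl _ inferInstance
    exact ((tfae_of_isNoetherianRing_of_isLocalRing_of_isDomain _).out 4 2).1 (h m)
  have hdim : Ring.DimensionLEOne A := by
    refine ⟨fun {P} hP0 hP => ?_⟩
    obtain ⟨m, hm, hPm⟩ := P.exists_le_maximal hP.ne_top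
    have hdisj : Disjoint (m.primeCompl : Set A) P :=
      Set.disjoint_left.2 fun a ha haP => ha (hPm haP)
    have hcomap := IsLocalization.under_map_of_isPrime_disjoint m.primeCompl
      (Localization.AtPrime m) hP hdisj
    have hmax : (P.map (algebraMap A (Localization.AtPrime m))).IsMaximal := by
      refine (hlocal m).maximalOfPrime ?_
        (IsLocalization.isPrime_of_isPrime_disjoint m.primeCompl _ P hP hdisj)
      rwa [Ne, Ideal.map_eq_bot_iff_of_injective
        (IsLocalization.injective _ m.primeCompl_le_nonZeroDivisors)]
    rw [IsLocalRing.eq_maximalIdeal hmax, Localization.AtPrime.under_maximalIdeal] at hcomap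
    exact hcomap ▸ hm
  have hclosed : IsIntegrallyClosed A :=
    IsIntegrallyClosed.of_localization_maximal fun m _ _ => (hlocal m).toIsIntegralClosure
  exact { maximalOfPrime := hdim.maximalOfPrime, __ := hclosed }

end LocalAlgebra

section HomogeneousPolynomials

variable {σ R : Type*} [CommSemiring R] {F : MvPolynomial σ R} {d : ℕ}

lemma aeval_mul_of_isHomogeneous {A : Type*} [CommSemiring A] [Algebra R A]
    (hF : F.IsHomogeneous d) (c : A) (y : σ → A) :
    aeval (fun l => c * y l) F = c ^ d * aeval y F := by
  rw [aeval_def, aeval_def, eval₂_eq, eval₂_eq, Finset.mul_sum]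
  refine Finset.sum_congr rfl fun b hb => ?_
  have hdegree : ∑ l ∈ b.support, b l = d := (hF.degree_eq_sum_deg_support hb).symm
  simp only [mul_pow, Finset.prod_mul_distrib, Finset.prod_pow_eq_pow_sum, hdegree]
  ring

lemma eval_smul_of_isHomogeneous (hF : F.IsHomogeneous d) (c : R) (y : σ → R) :
    eval (c • y) F = c ^ d * eval y F := by
  simpa only [aeval_eq_eval] using! aeval_mul_of_isHomogeneous hF c y

lemma homogeneousComponent_add_mul (hF : F.IsHomogeneous d) (a : MvPolynomial σ R) (t : ℕ) :
    homogeneousComponent (t + d) (a * F) = homogeneousComponent t a * F := by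
  classical
  let := gradedAlgebra (σ := σ) (R := R)
  simpa only [← decomposition.decompose'_apply] using!
    DirectSum.coe_decompose_mul_add_of_right_mem (homogeneousSubmodule σ R) (a := a) (i := t) hF

end HomogeneousPolynomials

section SmoothPoints

lemma sub_sum_pderiv_mem_sq {σ R : Type*} [Fintype σ] [CommRing R] {x : σ → R}
    {M : Ideal (MvPolynomial σ R)} (hM : ∀ l, X l - C (x l) ∈ M) (f : MvPolynomial σ R) :
    f - C (eval x f) - ∑ l, C (eval x (pderiv l f)) * (X l - C (x l)) ∈ M ^ 2 := by
  classical
  induction f using MvPolynomial.induction_on with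
  | C c => simp
  | add p q hp hq =>
    convert! (M ^ 2).add_mem hp hq using 1
    simp only [map_add, add_mul, Finset.sum_add_distrib]
    ring
  | mul_X p i hp =>
    have hprod : (∑ l, C (eval x (pderiv l p)) * (X l - C (x l))) * (X i - C (x i)) ∈ M ^ 2 := by
      rw [pow_two]
      exact Ideal.mul_mem_mul (Ideal.sum_mem _ fun l _ => Ideal.mul_mem_left _ _ (hM l)) (hM i)
    have hleibniz (l : σ) : C (eval x (pderiv l (p * X i))) * (X l - C (x l)) =
        C (eval x (pderiv l p)) * (X l - C (x l)) * C (x i) +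
        if l = i then C (eval x p) * (X i - C (x i)) else 0 := by
      rw [Derivation.leibniz, pderiv_X]
      rcases eq_or_ne l i with rfl | h
      · simp only [smul_eq_mul, Pi.single_eq_same, map_add, map_mul, eval_X, map_one, if_true]
        ring
      · simp only [smul_eq_mul, if_neg h, Pi.single_eq_of_ne h.symm, map_add, map_mul, eval_X,
          map_zero]
        ring
    convert! (M ^ 2).add_mem ((M ^ 2).mul_mem_right (X i) hp) hprod using 1
    simp only [hleibniz, Finset.sum_add_distrib, ← Finset.sum_mul, Finset.sum_ite_eq',
      Finset.mem_univ, if_true, map_mul, eval_X]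
    ring

variable {n : ℕ} {k : Type*} [Field k] {J : Ideal (MvPolynomial (Fin (n + 1)) k)}
  {x : Fin (n + 1) → k}

/-- The span of the gradients at `x` of the polynomials in `J`; its dimension is
`jacobianRank J x`. -/
def gradientSpan (J : Ideal (MvPolynomial (Fin (n + 1)) k)) (x : Fin (n + 1) → k) :
    Submodule k (Fin (n + 1) → k) :=
  Submodule.span k {v | ∃ f ∈ J, v = fun i => eval x (pderiv i f)}

lemma dotProduct_eq_zero_of_mem_gradientSpan (hhom : IsHomog J) (hx : x ∈ projZeros J)
    {v : Fin (n + 1) → k} (hv : v ∈ gradientSpan J x) : v ⬝ᵥ x = 0 := by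
  have hgrad {f : MvPolynomial (Fin (n + 1)) k} {d : ℕ} (hf : f ∈ J) (hd : f.IsHomogeneous d) :
      (fun i => eval x (pderiv i f)) ⬝ᵥ x = 0 := by
    have heuler := congrArg (eval x) hd.sum_X_mul_pderiv
    simpa only [map_sum, map_mul, eval_X, map_nsmul, hx.2 f hf, smul_zero,
      dotProduct_comm _ x] using! heuler
  induction hv using Submodule.span_induction with
  | mem v hv =>
    obtain ⟨f, hf, rfl⟩ := hv
    have hsum : (fun i => eval x (pderiv i f)) =
        ∑ d ∈ Finset.range (f.totalDegree + 1),
          fun i => eval x (pderiv i (homogeneousComponent d f)) := by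
      ext i
      rw [Finset.sum_apply, ← map_sum, ← map_sum, sum_homogeneousComponent]
    rw [hsum, sum_dotProduct]
    exact Finset.sum_eq_zero fun d _ =>
      hgrad (hhom f hf d) (homogeneousComponent_isHomogeneous d f)
  | zero => exact zero_dotProduct x
  | add v v' _ _ hv hv' => rw [add_dotProduct, hv, hv', add_zero]
  | smul a v _ hv => rw [smul_dotProduct, hv, smul_zero]

lemma exists_gradientSpan_sup_eq_top (hn : 1 ≤ n) (hhom : IsHomog J) (hx : x ∈ projZeros J)
    (hrank : jacobianRank J x = n - 1) {i : Fin (n + 1)} (hxi : x i ≠ 0) :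
    ∃ u : Fin (n + 1), gradientSpan J x ⊔ Submodule.span k {Pi.single i 1} ⊔
      Submodule.span k {Pi.single u 1} = ⊤ := by
  have hi : (Pi.single i 1 : Fin (n + 1) → k) ∉ gradientSpan J x := fun h =>
    hxi (by simpa using dotProduct_eq_zero_of_mem_gradientSpan hhom hx h)
  have hfinrank : Module.finrank k
      (gradientSpan J x ⊔ Submodule.span k {Pi.single i 1} : Submodule k _) = n := by
    rw [Submodule.finrank_sup_span_singleton hi, show Module.finrank k (gradientSpan J x) = n - 1
      from hrank, Nat.sub_add_cancel hn]
  obtain ⟨u, hu⟩ : ∃ u, (Pi.single u 1 : Fin (n + 1) → k) ∉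
      gradientSpan J x ⊔ Submodule.span k {Pi.single i 1} := by
    by_contra! hall
    have htop : gradientSpan J x ⊔ Submodule.span k {Pi.single i 1} = ⊤ := by
      rw [eq_top_iff, ← (Pi.basisFun k (Fin (n + 1))).span_eq, Submodule.span_le]
      rintro _ ⟨l, rfl⟩
      exact Pi.basisFun_apply k (Fin (n + 1)) l ▸ hall l
    rw [htop, finrank_top, Module.finrank_fin_fun] at hfinrank
    lia
  refine ⟨u, Submodule.eq_top_of_finrank_eq ?_⟩
  rw [Submodule.finrank_sup_span_singleton hu, hfinrank, Module.finrank_fin_fun]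

variable {A : Type*} [CommRing A] [Algebra k A] {π : MvPolynomial (Fin (n + 1)) k →ₐ[k] A}
  {m : Ideal A} {i : Fin (n + 1)}

lemma exists_le_span_sup_sq (hn : 1 ≤ n) (hhom : IsHomog J) (hx : x ∈ projZeros J)
    (hrank : jacobianRank J x = n - 1) (hπ : Function.Surjective π) (hJ : ∀ f ∈ J, π f = 0)
    (hxi : x i ≠ 0) (hi : π (X i - C (x i)) = 0) (hm : ∀ f, π f ∈ m ↔ eval x f = 0) :
    ∃ z ∈ m, m ≤ Ideal.span {z} ⊔ m ^ 2 := by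
  obtain ⟨u, hu⟩ := exists_gradientSpan_sup_eq_top hn hhom hx hrank hxi
  have hX (l : Fin (n + 1)) : π (X l - C (x l)) ∈ m := (hm _).2 (by simp)
  refine ⟨π (X u - C (x u)), hX u, fun a ha => ?_⟩
  set I := Ideal.span {π (X u - C (x u))} ⊔ m ^ 2
  let D : (Fin (n + 1) → k) →ₗ[k] A := Fintype.linearCombination k fun l => π (X l - C (x l))
  have hD_single (l : Fin (n + 1)) : D (Pi.single l 1) = π (X l - C (x l)) := by
    rw [Fintype.linearCombination_apply_single, one_smul]
  have htaylor (f : MvPolynomial (Fin (n + 1)) k) (hf : eval x f = 0) :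
      π f - D (fun l => eval x (pderiv l f)) ∈ I := by
    have hsq := Ideal.le_comap_pow π 2 (sub_sum_pderiv_mem_sq (M := m.comap π) hX f)
    simp only [hf, map_zero, sub_zero, ← smul_eq_C_mul, Ideal.mem_comap, map_sub π f, map_sum,
      map_smul] at hsq
    exact Ideal.mem_sup_right hsq
  have hD : ∀ v, D v ∈ I := by
    suffices h : (⊤ : Submodule k (Fin (n + 1) → k)) ≤ (I.restrictScalars k).comap D from
      fun v => h trivial
    rw [← hu]
    refine sup_le (sup_le (Submodule.span_le.2 ?_) ?_) ?_
    · rintro _ ⟨f, hf, rfl⟩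
      have := htaylor f (hx.2 f hf)
      rwa [hJ f hf, zero_sub, neg_mem_iff] at this
    · rw [Submodule.span_singleton_le_iff_mem, Submodule.mem_comap, hD_single, hi]
      exact Submodule.zero_mem _
    · rw [Submodule.span_singleton_le_iff_mem, Submodule.mem_comap, hD_single]
      exact Ideal.mem_sup_left (Ideal.mem_span_singleton_self _)
  obtain ⟨f, rfl⟩ := hπ a
  exact (Submodule.sub_mem_iff_left _ (hD _)).1 (htaylor f ((hm f).1 ha))

theorem isPrincipal_maximalIdeal_localization_of_jacobianRank_eq [IsAlgClosed k] (hn : 1 ≤ n)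
    (hhom : IsHomog J) (hrank : ∀ x ∈ projZeros J, jacobianRank J x = n - 1)
    (hπ : Function.Surjective π) (hJ : ∀ f ∈ J, π f = 0) {c : k} (hc : c ≠ 0)
    (hi : π (X i - C c) = 0) (m : Ideal A) [m.IsMaximal] :
    (IsLocalRing.maximalIdeal (Localization.AtPrime m)).IsPrincipal := by
  have hmax : (m.comap π).IsMaximal := Ideal.comap_isMaximal_of_surjective π hπ
  obtain ⟨x, hx⟩ := isMaximal_iff_eq_vanishingIdeal_singleton.1 hmax
  have hm (f : MvPolynomial (Fin (n + 1)) k) : π f ∈ m ↔ eval x f = 0 := by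
    rw [← Ideal.mem_comap, hx, mem_vanishingIdeal_singleton_iff, aeval_eq_eval]
  have hxi : x i = c := by
    have hzero := (hm (X i - C c)).1 (hi ▸ m.zero_mem)
    rwa [map_sub, eval_X, eval_C, sub_eq_zero] at hzero
  have hxJ : x ∈ projZeros J :=
    ⟨fun h => hc (by rw [← hxi, h, Pi.zero_apply]),
      fun f hf => (hm f).1 (hJ f hf ▸ m.zero_mem)⟩
  obtain ⟨z, hz, hle⟩ := exists_le_span_sup_sq hn hhom hxJ (hrank x hxJ) hπ hJ (hxi ▸ hc)
    (hxi ▸ hi) hm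
  have : IsNoetherianRing A := isNoetherianRing_of_surjective _ A π.toRingHom hπ
  exact isPrincipal_maximalIdeal_localization hz hle

end SmoothPoints

section Primality

lemma exists_notMem_forall_mul_mem {R : Type*} [CommSemiring R] {P I J : Ideal R} [P.IsPrime]
    (hI : I.FG) (h : ∀ a ∈ I, ∃ s ∉ P, s * a ∈ J) : ∃ s ∉ P, ∀ a ∈ I, s * a ∈ J := by
  classical
  obtain ⟨T, rfl⟩ := hI
  choose! s hs hsJ using h
  refine ⟨∏ a ∈ T, s a, fun hmem => ?_, fun a ha => ?_⟩
  · obtain ⟨a, ha, hsa⟩ := Ideal.IsPrime.prod_mem_iff.1 hmem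
    exact hs a (Ideal.subset_span ha) hsa
  · suffices Ideal.span T ≤ J.colon {∏ a ∈ T, s a} by
      simpa only [smul_eq_mul, mul_comm] using Submodule.mem_colon_singleton.1 (this ha)
    refine Ideal.span_le.2 fun b hb => Submodule.mem_colon_singleton.2 ?_
    rw [← Finset.prod_erase_mul T s hb, smul_eq_mul, mul_comm, mul_assoc]
    exact J.mul_mem_left _ (hsJ b (Ideal.subset_span hb))

lemma exists_isHomogeneous_eval_eq {σ K : Type*} [Field K] (s : MvPolynomial σ K) (i : σ) {c : K}
    (hc : c ≠ 0) : ∃ s' : MvPolynomial σ K, ∃ d, s'.IsHomogeneous d ∧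
      ∀ y : σ → K, y i = c → eval y s' = eval y s := by
  refine ⟨∑ t ∈ Finset.range (s.totalDegree + 1),
    homogeneousComponent t s * (C c⁻¹ * X i) ^ (s.totalDegree - t), s.totalDegree, ?_, ?_⟩
  · refine IsHomogeneous.sum _ _ _ fun t ht => ?_
    convert! (homogeneousComponent_isHomogeneous t s).mul ((isHomogeneous_C_mul_X c⁻¹ i).pow _)
    have := Finset.mem_range_succ_iff.1 ht
    lia
  · intro y hy
    conv_rhs => rw [← sum_homogeneousComponent s]
    simp only [map_sum, map_mul, map_pow, eval_C, eval_X, hy, inv_mul_cancel₀ hc, one_pow, mul_one]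

variable {n : ℕ} {k : Type*} [Field k] {I J : Ideal (MvPolynomial (Fin (n + 1)) k)}

lemma IsHomog.isHomogeneous (hJ : IsHomog J) :
    letI := gradedAlgebra (σ := Fin (n + 1)) (R := k)
    J.IsHomogeneous (homogeneousSubmodule (Fin (n + 1)) k) := by
  intro d f hf
  have hcomponent := hJ f hf d
  rwa [← decomposition.decompose'_apply] at hcomponent

lemma IsHomog.colon (hJ : IsHomog J) (hI : IsHomog I) : IsHomog (J.colon I) := by
  refine fun b hb t => Submodule.mem_colon.2 fun a ha => ?_
  suffices I ≤ J.colon {homogeneousComponent t b} by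
    simpa only [smul_eq_mul, mul_comm] using Submodule.mem_colon_singleton.1 (this ha)
  refine hI.le_of_forall_isHomogeneous fun a ha d hd => Submodule.mem_colon_singleton.2 ?_
  rw [smul_eq_mul, mul_comm, ← homogeneousComponent_add_mul hd]
  exact hJ _ (Submodule.mem_colon.1 hb a ha) _

lemma smul_mem_projZeros (hJ : IsHomog J) {a : k} (ha : a ≠ 0) {x : Fin (n + 1) → k}
    (hx : x ∈ projZeros J) : a • x ∈ projZeros J := by
  refine ⟨smul_ne_zero ha hx.1, fun f hf => ?_⟩
  suffices J ≤ RingHom.ker (eval (a • x)) from this hf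
  refine hJ.le_of_forall_isHomogeneous fun f hf d hd => ?_
  rw [RingHom.mem_ker, eval_smul_of_isHomogeneous hd, hx.2 f hf, mul_zero]

/-- The vanishing ideal of the affine curve `{y ∈ V(J) | y i = c}`; for `c ≠ 0` it is a copy of the
chart `X i ≠ 0` of the projective curve `V(J)`. -/
def sliceIdeal (J : Ideal (MvPolynomial (Fin (n + 1)) k)) (i : Fin (n + 1)) (c : k) :
    Ideal (MvPolynomial (Fin (n + 1)) k) :=
  vanishingIdeal k {y | y ∈ projZeros J ∧ y i = c}

lemma mem_sliceIdeal {i : Fin (n + 1)} {c : k} {f : MvPolynomial (Fin (n + 1)) k} :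
    f ∈ sliceIdeal J i c ↔ ∀ y ∈ projZeros J, y i = c → eval y f = 0 := by
  simp only [sliceIdeal, mem_vanishingIdeal_iff, aeval_eq_eval, Set.mem_ofPred_eq, and_imp]

lemma isReduced_quotient_sliceIdeal (i : Fin (n + 1)) (c : k) :
    IsReduced (MvPolynomial (Fin (n + 1)) k ⧸ sliceIdeal J i c) := by
  refine (Ideal.isRadical_iff_quotient_reduced _).1 fun f ⟨N, hf⟩ =>
    mem_sliceIdeal.2 fun y hy hyi => ?_
  exact eq_zero_of_pow_eq_zero ((map_pow (eval y) f N).symm.trans (mem_sliceIdeal.1 hf y hy hyi))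

variable [IsAlgClosed k]

theorem mem_of_forall_eval_eq_zero (hrad : J.IsRadical) (hne : (projZeros J).Nonempty)
    {G : MvPolynomial (Fin (n + 1)) k} {d : ℕ} (hG : G.IsHomogeneous d)
    (h : ∀ x ∈ projZeros J, eval x G = 0) : G ∈ J := by
  rw [← hrad.radical, ← vanishingIdeal_zeroLocus_eq_radical (K := k), mem_vanishingIdeal_iff]
  intro y hy
  rw [aeval_eq_eval]
  by_cases hy0 : y = 0
  · obtain ⟨x, hx⟩ := hne
    rw [hy0, ← zero_smul k x, eval_smul_of_isHomogeneous hG, h x hx, mul_zero]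
  · exact h y ⟨hy0, fun f hf => by simpa only [aeval_eq_eval] using hy f hf⟩

lemma mul_mem_of_forall_eval_eq_zero (hhom : IsHomog J) (hrad : J.IsRadical)
    (hne : (projZeros J).Nonempty) {G : MvPolynomial (Fin (n + 1)) k} {d : ℕ}
    (hG : G.IsHomogeneous d) {i : Fin (n + 1)} {c : k} (hc : c ≠ 0)
    (h : ∀ x ∈ projZeros J, x i = c → eval x G = 0) : X i * G ∈ J := by
  refine mem_of_forall_eval_eq_zero hrad hne ((isHomogeneous_X k i).mul hG) fun y hy => ?_
  rw [map_mul, eval_X, mul_eq_zero, or_iff_not_imp_left]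
  intro hyi
  have ha : c / y i ≠ 0 := div_ne_zero hc hyi
  have hscaled := h _ (smul_mem_projZeros hhom ha hy) (div_mul_cancel₀ c hyi)
  rw [eval_smul_of_isHomogeneous hG] at hscaled
  exact (mul_eq_zero.1 hscaled).resolve_left (pow_ne_zero d ha)

lemma exists_mul_mem_sliceIdeal (hn : 1 ≤ n) (hhom : IsHomog J)
    (hrank : ∀ x ∈ projZeros J, jacobianRank J x = n - 1)
    {x : Fin (n + 1) → k} (hx : x ∈ projZeros J) {i : Fin (n + 1)} (hxi : x i ≠ 0)
    {f g : MvPolynomial (Fin (n + 1)) k} (hfg : f * g ∈ sliceIdeal J i (x i)) :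
    ∃ s, eval x s ≠ 0 ∧ (s * f ∈ sliceIdeal J i (x i) ∨ s * g ∈ sliceIdeal J i (x i)) := by
  set I := sliceIdeal J i (x i)
  have := isReduced_quotient_sliceIdeal (J := J) i (x i)
  let φ : MvPolynomial (Fin (n + 1)) k ⧸ I →+* k :=
    Ideal.Quotient.lift I (eval x) fun f hf => mem_sliceIdeal.1 hf x hx rfl
  have hmax : (RingHom.ker φ).IsMaximal :=
    RingHom.ker_isMaximal_of_surjective φ fun c => ⟨Ideal.Quotient.mk I (C c), eval_C c⟩
  have hJ (f) (hf : f ∈ J) : Ideal.Quotient.mkₐ k I f = 0 :=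
    Ideal.Quotient.eq_zero_iff_mem.2 (mem_sliceIdeal.2 fun y hy _ => hy.2 f hf)
  have hi : Ideal.Quotient.mkₐ k I (X i - C (x i)) = 0 :=
    Ideal.Quotient.eq_zero_iff_mem.2 (mem_sliceIdeal.2 fun y _ hyi => by simp [hyi])
  have hprincipal := isPrincipal_maximalIdeal_localization_of_jacobianRank_eq hn hhom hrank
    (Ideal.Quotient.mkₐ_surjective k I) hJ hxi hi (RingHom.ker φ)
  have : IsNoetherianRing (Localization.AtPrime (RingHom.ker φ)) :=
    IsLocalization.isNoetherianRing (RingHom.ker φ).primeCompl _ inferInstance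
  have := isDomain_of_isPrincipal_maximalIdeal hprincipal
  have hfg0 : Ideal.Quotient.mk I f * Ideal.Quotient.mk I g = 0 :=
    Ideal.Quotient.eq_zero_iff_mem.2 hfg
  obtain ⟨s, hs, hsfg⟩ := exists_notMem_mul_eq_zero_of_mul_eq_zero (P := RingHom.ker φ) hfg0
  obtain ⟨s, rfl⟩ := Ideal.Quotient.mk_surjective s
  exact ⟨s, hs, hsfg.imp Ideal.Quotient.eq_zero_iff_mem.1 Ideal.Quotient.eq_zero_iff_mem.1⟩

theorem exists_mul_mem_or_mul_mem (hn : 1 ≤ n) (hhom : IsHomog J) (hrad : J.IsRadical)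
    (hrank : ∀ x ∈ projZeros J, jacobianRank J x = n - 1)
    {F G : MvPolynomial (Fin (n + 1)) k} {d e : ℕ} (hF : F.IsHomogeneous d)
    (hG : G.IsHomogeneous e) (hFG : F * G ∈ J) {x : Fin (n + 1) → k} (hx : x ∈ projZeros J) :
    ∃ s, eval x s ≠ 0 ∧ (s * F ∈ J ∨ s * G ∈ J) := by
  obtain ⟨i, hxi⟩ := Function.ne_iff.1 hx.1
  obtain ⟨s, hs, hsFG⟩ := exists_mul_mem_sliceIdeal hn hhom hrank hx hxi
    (mem_sliceIdeal.2 fun y hy _ => hy.2 _ hFG)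
  obtain ⟨s', t, hs't, hs'⟩ := exists_isHomogeneous_eval_eq s i hxi
  have hlift {H : MvPolynomial (Fin (n + 1)) k} {d : ℕ} (hH : H.IsHomogeneous d)
      (h : s * H ∈ sliceIdeal J i (x i)) : X i * s' * H ∈ J := by
    rw [mul_assoc]
    refine mul_mem_of_forall_eval_eq_zero hhom hrad ⟨x, hx⟩ (hs't.mul hH) hxi fun y hy hyi => ?_
    rw [map_mul, hs' y hyi, ← map_mul]
    exact mem_sliceIdeal.1 h y hy hyi
  refine ⟨X i * s', ?_, hsFG.imp (hlift hF) (hlift hG)⟩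
  rw [map_mul, eval_X, hs' x rfl]
  exact mul_ne_zero hxi hs

lemma exists_eval_ne_zero_mem_colon_colon (hn : 1 ≤ n) (hhom : IsHomog J) (hrad : J.IsRadical)
    (hrank : ∀ x ∈ projZeros J, jacobianRank J x = n - 1)
    {F : MvPolynomial (Fin (n + 1)) k} {d : ℕ} (hF : F.IsHomogeneous d) {x : Fin (n + 1) → k}
    (hx : x ∈ projZeros J) (hFx : ∀ a ∈ J.colon (Ideal.span {F}), eval x a = 0) :
    ∃ s ∈ J.colon (J.colon (Ideal.span {F} : Set (MvPolynomial (Fin (n + 1)) k))),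
      eval x s ≠ 0 := by
  set P := RingHom.ker (eval x)
  have : P.IsPrime := RingHom.ker_isPrime _
  let φ := algebraMap (MvPolynomial (Fin (n + 1)) k) (Localization.AtPrime P)
  have hφ (a) : a ∈ (J.map φ).comap φ ↔ ∃ s ∉ P, s * a ∈ J :=
    IsLocalization.algebraMap_mem_map_algebraMap_iff P.primeCompl _ _ _
  have hle : J.colon (Ideal.span {F}) ≤ (J.map φ).comap φ := by
    have hcolon := hhom.colon (isHomog_span (s := {F}) fun f hf => ⟨d, hf ▸ hF⟩)
    refine hcolon.le_of_forall_isHomogeneous fun a ha e he => (hφ a).2 ?_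
    have haF : a * F ∈ J := Ideal.mem_colon_span_singleton.1 ha
    obtain ⟨s, hs, hsa | hsF⟩ := exists_mul_mem_or_mul_mem hn hhom hrad hrank he hF haF hx
    · exact ⟨s, hs, hsa⟩
    · exact absurd (hFx s (Ideal.mem_colon_span_singleton.2 hsF)) hs
  obtain ⟨s, hs, hsJ⟩ := exists_notMem_forall_mul_mem (IsNoetherian.noetherian _)
    fun a ha => (hφ a).1 (hle ha)
  exact ⟨s, Submodule.mem_colon.2 hsJ, hs⟩

/-- At each point of `V(J)` only one of `(J : F)` and `(J : (J : F))` can vanish, because the local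
rings of `V(J)` are domains; connectedness then makes one of them vanish on all of `V(J)`. -/
theorem isPrime_of_isConnectedProjVariety (hn : 1 ≤ n) (hhom : IsHomog J) (hrad : J.IsRadical)
    (hrank : ∀ x ∈ projZeros J, jacobianRank J x = n - 1) (hconn : IsConnectedProjVariety J) :
    J.IsPrime := by
  obtain ⟨x, hx⟩ := hconn.1
  have hne_top : J ≠ ⊤ := (Ideal.ne_top_iff_one J).2 fun h =>
    one_ne_zero ((map_one (eval x)).symm.trans (hx.2 1 h))
  let := gradedAlgebra (σ := Fin (n + 1)) (R := k)
  refine hhom.isHomogeneous.isPrime_of_homogeneous_mem_or_mem hne_top ?_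
  rintro F G ⟨d, hF⟩ ⟨e, hG⟩ hFG
  set J₁ := J.colon (Ideal.span {F} : Set (MvPolynomial (Fin (n + 1)) k))
  set J₂ := J.colon (J₁ : Set (MvPolynomial (Fin (n + 1)) k))
  have hF₂ : F ∈ J₂ := Submodule.mem_colon.2 fun a ha => by
    simpa only [smul_eq_mul, mul_comm] using Ideal.mem_colon_span_singleton.1 ha
  have hG₁ : G ∈ J₁ := Ideal.mem_colon_span_singleton.2 (mul_comm F G ▸ hFG)
  have hJ₁ : IsHomog J₁ := hhom.colon (isHomog_span (s := {F}) fun f hf => ⟨d, hf ▸ hF⟩)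
  have hcover : projZeros J ⊆ projZeros J₁ ∪ projZeros J₂ := by
    intro y hy
    by_contra! hmem
    simp only [Set.mem_union, projZeros, Set.mem_ofPred_eq, hy.1, ne_eq, not_false_eq_true,
      true_and, not_or, not_forall] at hmem
    obtain ⟨⟨a, ha, hay⟩, b, hb, hby⟩ := hmem
    exact mul_ne_zero hby hay (by simpa using hy.2 _ (Submodule.mem_colon.1 hb a ha))
  have hdisjoint : projZeros J ∩ (projZeros J₁ ∩ projZeros J₂) = ∅ := by
    refine Set.eq_empty_of_forall_notMem fun y ⟨hy, hy₁, hy₂⟩ => ?_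
    obtain ⟨s, hs, hsy⟩ := exists_eval_ne_zero_mem_colon_colon hn hhom hrad hrank hF hy hy₁.2
    exact hsy (hy₂.2 s hs)
  rcases hconn.2 J₁ J₂ hJ₁ (hhom.colon hJ₁) hcover hdisjoint with h | h
  · exact .inr (mem_of_forall_eval_eq_zero hrad hconn.1 hG fun y hy => (h hy).2 G hG₁)
  · exact .inl (mem_of_forall_eval_eq_zero hrad hconn.1 hF fun y hy => (h hy).2 F hF₂)

end Primality

section Valuations

variable {L : Type*} [Field L]

open Algebra in
lemma exists_notMem_isIntegral_mul (B : Subring L) {m : Ideal B} (hm : m ≠ ⊤) {x : L}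
    (hx : ∀ V : ValuationSubring L, B ≤ V.toSubring → (∀ a ∈ m, (a : L) ∈ V.nonunits) → x ∈ V) :
    ∃ s : B, s ∉ m ∧ IsIntegral B ((s : L) * x) := by
  rcases eq_or_ne x 0 with rfl | hx0
  · exact ⟨1, (Ideal.ne_top_iff_one m).1 hm, by simpa only [mul_zero] using isIntegral_zero⟩
  let := invertibleOfNonzero (inv_ne_zero hx0)
  let B' := adjoin B {x⁻¹}
  let y : B' := ⟨x⁻¹, subset_adjoin rfl⟩
  by_cases htop : m.map (algebraMap B B') ⊔ .span {y} = ⊤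
  · obtain ⟨p, hp, hpx⟩ :=
      exists_aeval_invOf_eq_zero_of_idealMap_adjoin_sup_span_eq_top x⁻¹ m hm htop
    rw [invOf_eq_inv, inv_inv] at hpx
    refine ⟨p.leadingCoeff, fun h => (Ideal.ne_top_iff_one m).1 hm ?_,
      isIntegral_leadingCoeff_smul p x hpx⟩
    simpa only [sub_sub_cancel] using m.sub_mem h hp
  · obtain ⟨V, hB'V, hV⟩ := Ideal.image_subset_nonunits_valuationSubring (A := B'.toSubring) _ htop
    have hxV : x⁻¹ ∈ V.nonunits := hV ⟨y, Ideal.mem_sup_right (Ideal.subset_span rfl), rfl⟩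
    refine absurd (hx V (fun a ha => hB'V (B'.algebraMap_mem ⟨a, ha⟩)) fun a ha => ?_)
      ((V.inv_mem_nonunits_iff.1 hxV).resolve_left hx0)
    exact hV ⟨algebraMap B B' a, Ideal.mem_sup_left (Ideal.mem_map_of_mem _ ha), rfl⟩

variable {A : Type*} [CommRing A] [IsDedekindDomain A] [Algebra A L] [IsFractionRing A L]

open IsDedekindDomain WithZero

theorem exists_heightOneSpectrum_valuationSubring_eq {V : ValuationSubring L}
    (hA : ∀ a, algebraMap A L a ∈ V) (hV : V ≠ ⊤) :
    ∃ v : HeightOneSpectrum A, (v.valuation L).valuationSubring = V := by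
  let ι : A →+* V := (algebraMap A L).codRestrict V.toSubring hA
  let p : Ideal A := (IsLocalRing.maximalIdeal V).comap ι
  have hp {s : A} (hs : s ∉ p) : V.valuation (algebraMap A L s) = 1 :=
    (V.valuation_eq_one_iff (ι s)).1 (by simpa [p] using hs)
  have hdiv {x : L} {a s : A} (hs : s ∉ p) (hx : x * algebraMap A L s = algebraMap A L a) :
      x ∈ V := by
    rw [← V.valuation_le_one_iff]
    calc V.valuation x = V.valuation (algebraMap A L a) := by rw [← hx, map_mul, hp hs, mul_one]
      _ ≤ 1 := (V.valuation_le_one_iff _).2 (hA a)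
  have hp0 : p ≠ ⊥ := by
    refine fun hbot => hV (eq_top_iff.2 fun x _ => ?_)
    obtain ⟨a, s, hs, rfl⟩ := IsFractionRing.div_surjective A x
    refine hdiv (a := a) (s := s) ?_ (div_mul_cancel₀ _ ?_)
    · rw [hbot, Ideal.mem_bot]
      exact nonZeroDivisors.ne_zero hs
    · exact IsFractionRing.to_map_ne_zero_of_mem_nonZeroDivisors hs
  let v : HeightOneSpectrum A := ⟨p, Ideal.comap_isPrime ι _, hp0⟩
  refine ⟨v, ValuationSubring.eq_of_le_of_ne_top _ (fun x hx => ?_) hV⟩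
  obtain ⟨a, s, hx⟩ := v.exists_primeCompl_mul_eq_of_integer x hx
  exact hdiv s.2 hx

variable (A) in
theorem exists_finite_valuations_of_isDedekindDomain {f : L} (hf : f ≠ 0) :
    ∃ T : Set (Valuation L ℤᵐ⁰), T.Finite ∧ ∀ V : ValuationSubring L,
      (∀ a, algebraMap A L a ∈ V) → f ∈ V.nonunits → ∃ v ∈ T, v.valuationSubring = V := by
  refine ⟨_, (HeightOneSpectrum.Support.finite A f⁻¹).image fun v => v.valuation L,
    fun V hA hfV => ?_⟩
  have hinv : f⁻¹ ∉ V := (V.mem_nonunits_iff_or.1 hfV).resolve_left hf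
  obtain ⟨v, rfl⟩ := exists_heightOneSpectrum_valuationSubring_eq hA
    (fun htop => hinv (htop ▸ ValuationSubring.mem_top _))
  exact ⟨v.valuation L, ⟨v, Set.mem_ofPred_eq ▸ not_le.1 hinv, rfl⟩, rfl⟩

end Valuations

section GenericCoordinates

open WithZero

variable {n : ℕ} {k L : Type*} [Field k] [Field L] [Algebra k L] {ξ : Fin (n + 1) → L}

/-- `ξ` consists of homogeneous coordinates, in the function field `L`, of the generic point of the
integral projective variety `V(J)`; no coordinate is allowed to vanish. -/
structure IsGenericCoordinates (J : Ideal (MvPolynomial (Fin (n + 1)) k)) (ξ : Fin (n + 1) → L) :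
    Prop where
  ne_zero (i : Fin (n + 1)) : ξ i ≠ 0
  aeval_eq_zero_iff {F : MvPolynomial (Fin (n + 1)) k} {d : ℕ} (hF : F.IsHomogeneous d) :
    aeval ξ F = 0 ↔ F ∈ J
  adjoin_eq_top :
    IntermediateField.adjoin k (Set.range fun p : Fin (n + 1) × Fin (n + 1) => ξ p.1 / ξ p.2) = ⊤

variable (k) in
/-- The coordinate ring `k[ξ₀ / ξᵢ, …, ξₙ / ξᵢ]` of the affine chart `Xᵢ ≠ 0` of the projective
variety with generic point `ξ`. -/
noncomputable def chart (ξ : Fin (n + 1) → L) (i : Fin (n + 1)) : Subalgebra k L :=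
  (aeval fun l => ξ l / ξ i : MvPolynomial (Fin (n + 1)) k →ₐ[k] L).range

lemma exists_chart_le_valuationSubring (ξ : Fin (n + 1) → L) {V : ValuationSubring L}
    (hk : ∀ c, algebraMap k L c ∈ V) : ∃ i, ∀ a ∈ chart k ξ i, a ∈ V := by
  obtain ⟨i, hi⟩ := Finite.exists_max fun l => V.valuation (ξ l)
  let V' : Subalgebra k L := { V.toSubring with algebraMap_mem' := hk }
  suffices chart k ξ i ≤ V' from ⟨i, this⟩
  rw [chart, ← Algebra.adjoin_range_eq_range_aeval, Algebra.adjoin_le_iff]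
  rintro _ ⟨l, rfl⟩
  change ξ l / ξ i ∈ V
  rw [← V.valuation_le_one_iff, map_div₀]
  exact div_le_one_of_le₀ (hi l) zero_le

namespace IsGenericCoordinates

variable {J : Ideal (MvPolynomial (Fin (n + 1)) k)} (hξ : IsGenericCoordinates J ξ)
include hξ

lemma isFractionRing_chart (i : Fin (n + 1)) : IsFractionRing (chart k ξ i) L := by
  have htop : IntermediateField.adjoin k (Set.range fun l => ξ l / ξ i) = ⊤ := by
    rw [eq_top_iff, ← hξ.adjoin_eq_top, IntermediateField.adjoin_le_iff]
    rintro _ ⟨⟨l, l'⟩, rfl⟩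
    have hmem (l : Fin (n + 1)) :
        ξ l / ξ i ∈ IntermediateField.adjoin k (Set.range fun l => ξ l / ξ i) :=
      IntermediateField.subset_adjoin _ _ ⟨l, rfl⟩
    simpa only [div_div_div_cancel_right₀ (hξ.ne_zero i)] using! div_mem (hmem l) (hmem l')
  refine IsFractionRing.of_field _ _ fun z => ?_
  obtain ⟨r, s, hz⟩ := (IntermediateField.mem_adjoin_range_iff k _ z).1
    (htop ▸ IntermediateField.mem_top : z ∈ _)
  exact ⟨⟨_, r, rfl⟩, ⟨_, s, rfl⟩, hz⟩

lemma aeval_div_eq_zero_of_mem (hhom : IsHomog J) {f : MvPolynomial (Fin (n + 1)) k} (hf : f ∈ J)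
    (i : Fin (n + 1)) : aeval (fun l => ξ l / ξ i) f = 0 := by
  suffices J ≤ RingHom.ker (aeval fun l => ξ l / ξ i) from this hf
  refine hhom.le_of_forall_isHomogeneous fun f hf d hd => ?_
  simp only [RingHom.mem_ker, div_eq_inv_mul]
  rw [aeval_mul_of_isHomogeneous hd, (hξ.aeval_eq_zero_iff hd).2 hf, mul_zero]

theorem isDedekindDomain_chart [IsAlgClosed k] (hn : 1 ≤ n) (hhom : IsHomog J)
    (hrank : ∀ x ∈ projZeros J, jacobianRank J x = n - 1) (i : Fin (n + 1)) :
    IsDedekindDomain (chart k ξ i) := by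
  let π : MvPolynomial (Fin (n + 1)) k →ₐ[k] chart k ξ i :=
    (aeval fun l => ξ l / ξ i).rangeRestrict
  have hπ : Function.Surjective π := AlgHom.rangeRestrict_surjective _
  have : IsNoetherianRing (chart k ξ i) := isNoetherianRing_of_surjective _ _ π.toRingHom hπ
  have hJ : ∀ f ∈ J, π f = 0 := fun f hf => Subtype.ext (hξ.aeval_div_eq_zero_of_mem hhom hf i)
  have hi : π (X i - C 1) = 0 := Subtype.ext <|
    show aeval (fun l => ξ l / ξ i) (X i - C 1) = 0 by simp [div_self (hξ.ne_zero i)]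
  refine isDedekindDomain_of_isPrincipal_maximalIdeal_localization fun m _ => ?_
  exact isPrincipal_maximalIdeal_localization_of_jacobianRank_eq hn hhom hrank hπ hJ
    one_ne_zero hi m

theorem exists_finite_valuations (hD : ∀ i, IsDedekindDomain (chart k ξ i)) {f : L} (hf : f ≠ 0) :
    ∃ T : Set (Valuation L ℤᵐ⁰), T.Finite ∧ ∀ V : ValuationSubring L,
      (∀ c, algebraMap k L c ∈ V) → f ∈ V.nonunits → ∃ v ∈ T, v.valuationSubring = V := by
  have := hξ.isFractionRing_chart
  choose T hT hTV using fun i => exists_finite_valuations_of_isDedekindDomain (chart k ξ i) hf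
  refine ⟨⋃ i, T i, Set.finite_iUnion hT, fun V hk hfV => ?_⟩
  obtain ⟨i, hi⟩ := exists_chart_le_valuationSubring ξ hk
  obtain ⟨v, hv, rfl⟩ := hTV i V (fun a => hi a a.2) hfV
  exact ⟨v, Set.mem_iUnion_of_mem i hv, rfl⟩

end IsGenericCoordinates

theorem exists_isGenericCoordinates.{u} {k : Type u} [Field k]
    {J : Ideal (MvPolynomial (Fin (n + 1)) k)} [J.IsPrime] (hX : ∀ l, X l ∉ J) :
    ∃ (L : Type u) (_ : Field L) (_ : Algebra k L) (ξ : Fin (n + 1) → L),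
      IsGenericCoordinates J ξ := by
  let E := FractionRing (MvPolynomial (Fin (n + 1)) k ⧸ J)
  let x (l : Fin (n + 1)) : E := algebraMap _ E (Ideal.Quotient.mk J (X l))
  have hxF (F : MvPolynomial (Fin (n + 1)) k) : aeval x F = 0 ↔ F ∈ J := by
    have haeval : aeval x = (IsScalarTower.toAlgHom k (MvPolynomial (Fin (n + 1)) k ⧸ J) E).comp
        (Ideal.Quotient.mkₐ k J) := by
      ext l
      simp [x]
    rw [haeval, ← Ideal.Quotient.eq_zero_iff_mem]
    exact FaithfulSMul.algebraMap_eq_zero_iff (MvPolynomial (Fin (n + 1)) k ⧸ J) E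
  have hx0 (l : Fin (n + 1)) : x l ≠ 0 := by
    rw [← aeval_X (R := k) x l]
    exact (hxF _).not.2 (hX l)
  let y (p : Fin (n + 1) × Fin (n + 1)) : E := x p.1 / x p.2
  let L := IntermediateField.adjoin k (Set.range y)
  let ξ (l : Fin (n + 1)) : L := ⟨y (l, 0), IntermediateField.subset_adjoin _ _ ⟨(l, 0), rfl⟩⟩
  refine ⟨L, inferInstance, inferInstance, ξ, fun l h => ?_, fun {F d} hF => ?_, ?_⟩
  · exact div_ne_zero (hx0 l) (hx0 0) (congrArg Subtype.val h)
  · have hcoe : ((aeval ξ F : L) : E) = (x 0)⁻¹ ^ d * aeval x F := by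
      rw [← aeval_mul_of_isHomogeneous hF]
      convert! (aeval_algebraMap_apply (B := E) ξ F).symm using 3
      exact (div_eq_inv_mul _ _).symm
    rw [← ZeroMemClass.coe_eq_zero, hcoe, mul_eq_zero, hxF,
      or_iff_right (pow_ne_zero d (inv_ne_zero (hx0 0)))]
  · apply IntermediateField.map_injective L.val
    rw [IntermediateField.adjoin_map, ← AlgHom.fieldRange_eq_map, IntermediateField.fieldRange_val,
      ← Set.range_comp]
    congr 2
    ext p
    exact div_div_div_cancel_right₀ (hx0 0) _ _

end GenericCoordinates

section Homogenization

variable {σ R : Type*} [CommSemiring R] {p : MvPolynomial σ R} {D : ℕ}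

/-- The homogenization of `p` to degree `D` with respect to the variable `X j`. Where the truncated
subtraction matters, `p` has total degree at most `D`. -/
noncomputable def homogenizeAt (j : σ) (D : ℕ) (p : MvPolynomial σ R) : MvPolynomial σ R :=
  ∑ b ∈ p.support, monomial (b + Finsupp.single j (D - b.degree)) (p.coeff b)

lemma isHomogeneous_homogenizeAt (j : σ) (hD : p.totalDegree ≤ D) :
    (homogenizeAt j D p).IsHomogeneous D := by
  refine IsHomogeneous.sum _ _ _ fun b hb => isHomogeneous_monomial _ ?_
  rw [map_add, Finsupp.degree_single]
  exact Nat.add_sub_of_le ((le_totalDegree hb).trans hD)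

lemma exists_of_mem_support_homogenizeAt {j : σ} {c : σ →₀ ℕ}
    (hc : c ∈ (homogenizeAt j D p).support) :
    ∃ b ∈ p.support, c = b + Finsupp.single j (D - b.degree) := by
  classical
  obtain ⟨b, hb, hcb⟩ := Finset.mem_biUnion.1 (support_sum hc)
  exact ⟨b, hb, Finset.mem_singleton.1 (support_monomial_subset hcb)⟩

lemma aeval_homogenizeAt_of_eq_one {A : Type*} [CommSemiring A] [Algebra R A] {y : σ → A} {j : σ}
    (hy : y j = 1) : aeval y (homogenizeAt j D p) = aeval y p := by
  conv_rhs => rw [p.as_sum]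
  rw [homogenizeAt, map_sum, map_sum]
  refine Finset.sum_congr rfl fun b _ => ?_
  rw [← mul_one (coeff b p), ← monomial_mul, map_mul, mul_one]
  rw [aeval_monomial y (.single _ _), Finsupp.prod_single_index (h := fun i m => y i ^ m)
    (pow_zero _), hy, one_pow, map_one, mul_one, mul_one]

lemma aeval_homogenizeAt {L : Type*} [Field L] [Algebra R L] {ξ : σ → L} {j : σ} (hj : ξ j ≠ 0)
    (hD : p.totalDegree ≤ D) :
    aeval ξ (homogenizeAt j D p) = ξ j ^ D * aeval (fun l => ξ l / ξ j) p := by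
  rw [← aeval_homogenizeAt_of_eq_one (y := fun l => ξ l / ξ j) (D := D) (div_self hj),
    ← aeval_mul_of_isHomogeneous (isHomogeneous_homogenizeAt j hD)]
  simp only [mul_div_cancel₀ _ hj]

lemma eq_zero_of_homogenizeAt_eq_zero {j : σ} (hj : ∀ b ∈ p.support, b j = 0)
    (h : homogenizeAt j D p = 0) : p = 0 := by
  classical
  refine support_eq_empty.1 (Finset.eq_empty_of_forall_notMem fun b hb => ?_)
  refine mem_support_iff.1 hb ?_
  rw [← coeff_zero (b + Finsupp.single j (D - b.degree)), ← h, homogenizeAt, coeff_sum,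
    Finset.sum_eq_single_of_mem b hb fun c hc hcb => ?_, coeff_monomial, if_pos rfl]
  rw [coeff_monomial]
  refine if_neg fun hbc => hcb (Finsupp.ext fun l => ?_)
  by_cases hl : l = j
  · rw [hl, hj c hc, hj b hb]
  · simpa [Finsupp.single_apply, Ne.symm hl] using DFunLike.congr_fun hbc l

end Homogenization

section WeightFiltration

variable {σ A : Type*} (k : Type*) [CommRing k] [CommRing A] [Algebra k A]

/-- The increasing filtration of `k[u]` whose `r`-th step is spanned by the monomials in `u` of
`δ`-weight at most `r`. -/
noncomputable def weightFiltration (δ : σ → ℤ) (u : σ → A) (r : ℤ) : Submodule k A :=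
  (restrictSupport k {b | Finsupp.weight δ b ≤ r}).map (aeval u).toLinearMap

variable {k} {δ : σ → ℤ} {u : σ → A} {r s : ℤ}

lemma weightFiltration_mono : Monotone (weightFiltration k δ u) := fun _ _ hrs =>
  Submodule.map_mono (restrictSupport_mono k fun _ hb => le_trans hb hrs)

lemma aeval_mem_weightFiltration {p : MvPolynomial σ k}
    (hp : ∀ b ∈ p.support, Finsupp.weight δ b ≤ r) : aeval u p ∈ weightFiltration k δ u r :=
  Submodule.mem_map_of_mem ((mem_restrictSupport_iff k).2 hp)

lemma aeval_monomial_mem_weightFiltration (b : σ →₀ ℕ) (c : k) :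
    aeval u (monomial b c) ∈ weightFiltration k δ u (Finsupp.weight δ b) :=
  Submodule.mem_map_of_mem ((monomial_mem_restrictSupport k).2 (.inl (le_refl (_ : ℤ))))

lemma mem_weightFiltration_self (i : σ) : u i ∈ weightFiltration k δ u (δ i) := by
  simpa [aeval_monomial, Finsupp.weight_single] using
    aeval_monomial_mem_weightFiltration (u := u) (δ := δ) (Finsupp.single i 1) (1 : k)

lemma algebraMap_mem_weightFiltration_zero (c : k) :
    algebraMap k A c ∈ weightFiltration k δ u 0 := by
  simpa using aeval_monomial_mem_weightFiltration (u := u) (δ := δ) 0 c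

lemma mul_mem_weightFiltration {x y : A} (hx : x ∈ weightFiltration k δ u r)
    (hy : y ∈ weightFiltration k δ u s) : x * y ∈ weightFiltration k δ u (r + s) := by
  have hxy := Submodule.mul_mem_mul hx hy
  rw [weightFiltration, weightFiltration, ← Submodule.map_mul, ← restrictSupport_add] at hxy
  refine Submodule.map_mono (restrictSupport_mono k ?_) hxy
  rintro _ ⟨b, hb, c, hc, rfl⟩
  simp only [Set.mem_ofPred_eq, map_add] at hb hc ⊢
  exact add_le_add hb hc

lemma pow_mem_weightFiltration {x : A} (hx : x ∈ weightFiltration k δ u r) (N : ℕ) :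
    x ^ N ∈ weightFiltration k δ u (N * r) := by
  induction N with
  | zero => simpa using algebraMap_mem_weightFiltration_zero (u := u) (δ := δ) (1 : k)
  | succ N ih => simpa [pow_succ, add_mul] using mul_mem_weightFiltration ih hx

lemma pow_sub_pow_mem_weightFiltration {x y : A} (hx : x ∈ weightFiltration k δ u r)
    (hxy : x - y ∈ weightFiltration k δ u (r - 1)) (N : ℕ) :
    x ^ N - y ^ N ∈ weightFiltration k δ u (N * r - 1) := by
  have hy : y ∈ weightFiltration k δ u r := by
    simpa using sub_mem hx (weightFiltration_mono (sub_le_self r zero_le_one) hxy)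
  induction N with
  | zero => simp
  | succ N ih =>
    have hsplit : x ^ (N + 1) - y ^ (N + 1) = x ^ N * (x - y) + (x ^ N - y ^ N) * y := by ring
    rw [hsplit]
    convert add_mem (mul_mem_weightFiltration (pow_mem_weightFiltration hx N) hxy)
      (weightFiltration_mono ?_ (mul_mem_weightFiltration ih hy)) using 2 <;> push_cast <;> lia

lemma mul_aeval_monomial_sub_mem_weightFiltration {x : A} {c : k} {b : σ →₀ ℕ}
    (hx : x - algebraMap k A c ∈ weightFiltration k δ u (-1)) (hb : Finsupp.weight δ b = r) :
    x * aeval u (monomial b (1 : k)) - aeval u (monomial b c) ∈ weightFiltration k δ u (r - 1) := by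
  have hmul := mul_mem_weightFiltration hx (aeval_monomial_mem_weightFiltration b (1 : k))
  rw [hb, neg_add_eq_sub] at hmul
  simpa [aeval_monomial, sub_mul] using hmul

lemma exists_mem_weightFiltration (p : MvPolynomial σ k) :
    ∃ r, aeval u p ∈ weightFiltration k δ u r := by
  obtain ⟨r, hr⟩ := (p.support.finite_toSet.image (Finsupp.weight δ)).bddAbove
  exact ⟨r, aeval_mem_weightFiltration fun b hb => hr ⟨b, hb, rfl⟩⟩

end WeightFiltration

section VertexFiltration

/-- The weight of the affine coordinate `ξ l / ξ j`, when `ξ l` has weight `w l`. -/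
def relWeight {σ : Type*} (w : σ → ℕ) (j l : σ) : ℤ := w l - w j

lemma weight_eq_weight_relWeight_add {σ : Type*} (w : σ → ℕ) (j : σ) (b : σ →₀ ℕ) :
    (Finsupp.weight w b : ℤ) = Finsupp.weight (relWeight w j) b + b.degree * w j := by
  simp only [Finsupp.weight_apply, Finsupp.degree_apply, Finsupp.sum, relWeight, nsmul_eq_mul,
    smul_eq_mul, Nat.cast_sum, Nat.cast_mul, Finset.sum_mul, ← Finset.sum_add_distrib]
  exact Finset.sum_congr rfl fun l _ => by ring

lemma weight_relWeight_add_single {σ : Type*} (w : σ → ℕ) (j : σ) (b : σ →₀ ℕ) (m : ℕ) :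
    Finsupp.weight (relWeight w j) (b + Finsupp.single j m) = Finsupp.weight (relWeight w j) b := by
  simp [Finsupp.weight_single, relWeight]

variable {n : ℕ} {k L : Type*} [Field k] [Field L] [Algebra k L]

/-- The weight filtration of the coordinate ring of the chart `X j ≠ 0`, by the weights relative
to `w j`. -/
noncomputable abbrev vertexFiltration (k : Type*) [Field k] [Algebra k L] (w : Fin (n + 1) → ℕ)
    (ξ : Fin (n + 1) → L) (j : Fin (n + 1)) (r : ℤ) : Submodule k L :=
  weightFiltration k (relWeight w j) (fun l => ξ l / ξ j) r

/-- The exponents of relative weight `r` whose support lies in the link of `j`: they index the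
basis of the `r`-th graded piece of `vertexFiltration`. -/
def linkExponents (Γ : SComplex n) (w : Fin (n + 1) → ℕ) (j : Fin (n + 1)) (r : ℤ) :
    Set (Fin (n + 1) →₀ ℕ) :=
  {b | b j = 0 ∧ insert j b.support ∈ Γ.faces ∧ Finsupp.weight (relWeight w j) b = r}

variable {Γ : SComplex n} {J : Ideal (MvPolynomial (Fin (n + 1)) k)} {w : Fin (n + 1) → ℕ}
  {ξ : Fin (n + 1) → L} {j : Fin (n + 1)} {r : ℤ}

namespace IsWeightDegeneration

variable (hw : IsWeightDegeneration Γ J w) (hξ : IsGenericCoordinates J ξ)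
include hw hξ

theorem eq_zero_of_aeval_mem_vertexFiltration {p : MvPolynomial (Fin (n + 1)) k}
    (hp : ∀ b ∈ p.support, b ∈ linkExponents Γ w j r)
    (hpr : aeval (fun l => ξ l / ξ j) p ∈ vertexFiltration k w ξ j (r - 1)) : p = 0 := by
  obtain ⟨q, hq, hqp⟩ := hpr
  let D := max p.totalDegree q.totalDegree
  have hpD : p.totalDegree ≤ D := le_max_left ..
  have hqD : q.totalDegree ≤ D := le_max_right ..
  have hmem : homogenizeAt j D p - homogenizeAt j D q ∈ J := by
    rw [← hξ.aeval_eq_zero_iff ((isHomogeneous_homogenizeAt j hpD).sub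
      (isHomogeneous_homogenizeAt j hqD)), map_sub, aeval_homogenizeAt (hξ.ne_zero j) hpD,
      aeval_homogenizeAt (hξ.ne_zero j) hqD, ← hqp]
    exact sub_self _
  have hweight {f : MvPolynomial (Fin (n + 1)) k} (hf : f.totalDegree ≤ D) {c}
      (hc : c ∈ (homogenizeAt j D f).support) : ∃ b ∈ f.support, c.support ⊆ insert j b.support ∧
        (Finsupp.weight w c : ℤ) = Finsupp.weight (relWeight w j) b + D * w j := by
    obtain ⟨b, hb, rfl⟩ := exists_of_mem_support_homogenizeAt hc
    have hbD : b.degree ≤ D := (le_totalDegree hb).trans hf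
    refine ⟨b, hb, Finsupp.support_add.trans ?_, ?_⟩
    · rw [Finset.insert_eq, Finset.union_comm]
      exact Finset.union_subset_union_left Finsupp.support_single_subset
    · rw [weight_eq_weight_relWeight_add w j, weight_relWeight_add_single, map_add,
        Finsupp.degree_single, Nat.add_sub_of_le hbD]
  refine eq_zero_of_homogenizeAt_eq_zero (fun b hb => (hp b hb).1) <|
    hw.eq_zero_of_sub_mem (T := (r + D * w j).toNat) hmem (fun c hc => ?_) fun c hc => ?_
  · obtain ⟨b, hb, hsupp, hwt⟩ := hweight hpD hc
    exact ⟨Γ.down_closed (hp b hb).2.1 hsupp, by have := (hp b hb).2.2; lia⟩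
  · obtain ⟨b, hb, -, hwt⟩ := hweight hqD hc
    have : Finsupp.weight (relWeight w j) b ≤ r - 1 := hq hb
    lia

variable (hhom : IsHomog J)
include hhom

lemma aeval_monomial_mem_vertexFiltration_sub_one {b : Fin (n + 1) →₀ ℕ}
    (hb : insert j b.support ∉ Γ.faces) (c : k) :
    aeval (fun l => ξ l / ξ j) (monomial b c) ∈
      vertexFiltration k w ξ j (Finsupp.weight (relWeight w j) b - 1) := by
  have hsupp : (b + Finsupp.single j 1).support = insert j b.support := by
    ext l
    by_cases hl : l = j <;> simp [hl, Ne.symm]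
  obtain ⟨g, hgJ, hg⟩ := hw.exists_sub_mem (b := b + Finsupp.single j 1) (hsupp ▸ hb)
  have heq : aeval (fun l => ξ l / ξ j) (monomial b (1 : k)) = aeval (fun l => ξ l / ξ j) g := by
    rw [← sub_eq_zero, ← hξ.aeval_div_eq_zero_of_mem hhom hgJ j, map_sub, monomial_add_single,
      map_mul, pow_one, aeval_X, div_self (hξ.ne_zero j), mul_one]
  rw [← mul_one c, ← smul_eq_mul, ← smul_monomial, map_smul, heq]
  refine Submodule.smul_mem _ c (aeval_mem_weightFiltration fun d hd => ?_)
  obtain ⟨hdeg, hlt⟩ := hg d hd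
  have hd' := weight_eq_weight_relWeight_add w j d
  have hb' := weight_eq_weight_relWeight_add w j (b + Finsupp.single j 1)
  rw [weight_relWeight_add_single, ← hdeg] at hb'
  lia

theorem vertexFiltration_le (j : Fin (n + 1)) (r : ℤ) : vertexFiltration k w ξ j r ≤
    (restrictSupport k (linkExponents Γ w j r)).map (aeval fun l => ξ l / ξ j).toLinearMap ⊔
      vertexFiltration k w ξ j (r - 1) := by
  rw [vertexFiltration, weightFiltration, restrictSupport_eq_span, Submodule.map_span,
    Submodule.span_le]
  rintro _ ⟨_, ⟨b, hbr, rfl⟩, rfl⟩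
  rw [Set.mem_ofPred_eq] at hbr
  rcases lt_or_eq_of_le hbr with hlt | rfl
  · exact Submodule.mem_sup_right
      (weightFiltration_mono (Int.le_sub_one_of_lt hlt) (aeval_monomial_mem_weightFiltration b 1))
  by_cases hface : insert j b.support ∈ Γ.faces
  · refine Submodule.mem_sup_left ⟨monomial (b.erase j) 1, ?_, ?_⟩
    · refine (monomial_mem_restrictSupport k).2 (.inl ⟨Finsupp.erase_same, ?_, ?_⟩)
      · rw [Finsupp.support_erase]
        exact Γ.down_closed hface (Finset.insert_subset_insert j (Finset.erase_subset ..))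
      · conv_rhs => rw [← Finsupp.erase_add_single j b, weight_relWeight_add_single]
    · conv_rhs => rw [← Finsupp.erase_add_single j b]
      simp [monomial_add_single, div_self (hξ.ne_zero j)]
  · exact Submodule.mem_sup_right
      (hw.aeval_monomial_mem_vertexFiltration_sub_one hξ hhom hface 1)

lemma exists_sub_aeval_mem_vertexFiltration {x : L} (hx : x ∈ vertexFiltration k w ξ j r) :
    ∃ p : MvPolynomial (Fin (n + 1)) k, (∀ b ∈ p.support, b ∈ linkExponents Γ w j r) ∧
      x - aeval (fun l => ξ l / ξ j) p ∈ vertexFiltration k w ξ j (r - 1) := by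
  obtain ⟨_, ⟨p, hp, rfl⟩, y, hy, rfl⟩ :=
    Submodule.mem_sup.1 (hw.vertexFiltration_le hξ hhom j r hx)
  exact ⟨p, hp, by simpa using hy⟩

lemma coeff_eq_zero_of_aeval_mem_vertexFiltration {p : MvPolynomial (Fin (n + 1)) k}
    (hp : ∀ b ∈ p.support, b j = 0 ∧ Finsupp.weight (relWeight w j) b = r)
    (hpr : aeval (fun l => ξ l / ξ j) p ∈ vertexFiltration k w ξ j (r - 1))
    {b : Fin (n + 1) →₀ ℕ} (hb : insert j b.support ∈ Γ.faces) : p.coeff b = 0 := by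
  classical
  let p₁ := ∑ c ∈ p.support with insert j c.support ∈ Γ.faces, monomial c (p.coeff c)
  let p₂ := ∑ c ∈ p.support with insert j c.support ∉ Γ.faces, monomial c (p.coeff c)
  have hsum : p₁ + p₂ = p := (Finset.sum_filter_add_sum_filter_not ..).trans p.as_sum.symm
  have hp₂ : aeval (fun l => ξ l / ξ j) p₂ ∈ vertexFiltration k w ξ j (r - 1) := by
    rw [map_sum]
    refine sum_mem fun c hc => ?_
    obtain ⟨hc, hcface⟩ := Finset.mem_filter.1 hc
    rw [← (hp c hc).2]
    exact hw.aeval_monomial_mem_vertexFiltration_sub_one hξ hhom hcface _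
  have hp₁ : p₁ = 0 := by
    refine hw.eq_zero_of_aeval_mem_vertexFiltration hξ (j := j) (r := r) (fun c hc => ?_) ?_
    · obtain ⟨d, hd, hcd⟩ := Finset.mem_biUnion.1 (support_sum hc)
      obtain rfl := Finset.mem_singleton.1 (support_monomial_subset hcd)
      obtain ⟨hc, hcface⟩ := Finset.mem_filter.1 hd
      exact ⟨(hp c hc).1, hcface, (hp c hc).2⟩
    · rw [← hsum, map_add] at hpr
      exact (Submodule.add_mem_iff_left _ hp₂).1 hpr
  by_contra hbp
  have hbmem : b ∈ p.support.filter fun c => insert j c.support ∈ Γ.faces :=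
    Finset.mem_filter.2 ⟨mem_support_iff.2 hbp, hb⟩
  have hcoeff : p₁.coeff b = p.coeff b := by
    simp only [p₁, coeff_sum, coeff_monomial, Finset.sum_ite_eq', if_pos hbmem]
  exact hbp (by rw [← hcoeff, hp₁, coeff_zero])

theorem mem_vertexFiltration_of_pow_mem {x : L} (hx : x ∈ vertexFiltration k w ξ j r) {N : ℕ}
    (hxN : x ^ N ∈ vertexFiltration k w ξ j (N * r - 1)) :
    x ∈ vertexFiltration k w ξ j (r - 1) := by
  obtain ⟨p, hp, hxp⟩ := hw.exists_sub_aeval_mem_vertexFiltration hξ hhom hx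
  suffices p = 0 by simpa [this] using hxp
  have hpN : aeval (fun l => ξ l / ξ j) (p ^ N) ∈ vertexFiltration k w ξ j (N * r - 1) := by
    rw [map_pow]
    simpa using sub_mem hxN (pow_sub_pow_mem_weightFiltration hx hxp N)
  have hsupp (M : ℕ) : p ^ M ∈ restrictSupport k
      {b | b j = 0 ∧ Finsupp.weight (relWeight w j) b = M * r} := by
    induction M with
    | zero => simpa using (monomial_mem_restrictSupport k (m := 0) (r := (1 : k))).2 (by simp)
    | succ M ih =>
      have hmul := Submodule.mul_mem_mul ih ((mem_restrictSupport_iff k).2 hp)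
      rw [← restrictSupport_add, ← pow_succ] at hmul
      refine restrictSupport_mono k ?_ hmul
      rintro _ ⟨b, ⟨hbj, hb⟩, c, ⟨hcj, -, hc⟩, rfl⟩
      exact ⟨by simp [hbj, hcj], by simp only [map_add, hb, hc]; push_cast; ring⟩
  by_contra hp0
  let m : MonomialOrder (Fin (n + 1)) := MonomialOrder.lex
  refine pow_ne_zero N ((m.leadingCoeff_ne_zero_iff).2 hp0) ?_
  rw [← m.coeff_pow_nsmul_degree]
  refine hw.coeff_eq_zero_of_aeval_mem_vertexFiltration hξ hhom (hsupp N) hpN ?_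
  exact Γ.down_closed (hp _ (m.degree_mem_support hp0)).2.1
    (Finset.insert_subset_insert j Finsupp.support_smul)

end IsWeightDegeneration

end VertexFiltration

section WeightSubalgebra

variable {σ A : Type*} (k : Type*) [CommRing k] [CommRing A] [Algebra k A]

/-- The part of `k[u]` of nonpositive `δ`-weight. -/
noncomputable def weightSubalgebra (δ : σ → ℤ) (u : σ → A) : Subalgebra k A where
  __ := weightFiltration k δ u 0
  mul_mem' hx hy := by simpa using mul_mem_weightFiltration hx hy
  algebraMap_mem' := algebraMap_mem_weightFiltration_zero

/-- The elements of negative `δ`-weight in `weightSubalgebra k δ u`. -/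
noncomputable def weightIdeal (δ : σ → ℤ) (u : σ → A) : Ideal (weightSubalgebra k δ u) where
  carrier := (↑) ⁻¹' (weightFiltration k δ u (-1) : Set A)
  zero_mem' := zero_mem (weightFiltration k δ u (-1))
  add_mem' hx hy := Submodule.add_mem (weightFiltration k δ u (-1)) hx hy
  smul_mem' x y hy := by simpa using mul_mem_weightFiltration (r := 0) x.2 hy

variable {k} {δ : σ → ℤ} {u : σ → A} {r : ℤ}

lemma mem_weightIdeal {x : weightSubalgebra k δ u} :
    x ∈ weightIdeal k δ u ↔ (x : A) ∈ weightFiltration k δ u (-1) := Iff.rfl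

lemma exists_pow_mem_weightFiltration_of_isIntegral {x : A}
    (hx : IsIntegral (weightSubalgebra k δ u) x) (hxr : x ∈ weightFiltration k δ u r)
    (hr : 0 < r) : ∃ N : ℕ, x ^ N ∈ weightFiltration k δ u (N * r - 1) := by
  obtain ⟨p, hp, hpx⟩ := hx
  refine ⟨p.natDegree, ?_⟩
  rw [Polynomial.eval₂_eq_sum_range, Finset.sum_range_succ, hp.coeff_natDegree, map_one, one_mul,
    add_comm, ← eq_neg_iff_add_eq_zero] at hpx
  rw [hpx]
  refine neg_mem (sum_mem fun i hi => ?_)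
  refine weightFiltration_mono ?_
    (mul_mem_weightFiltration (r := 0) (p.coeff i).2 (pow_mem_weightFiltration hxr i))
  nlinarith [Finset.mem_range.1 hi]

lemma mem_of_mem_weightFiltration {I : Ideal (weightSubalgebra k δ u)}
    (h : ∀ b, Finsupp.weight δ b ≤ r → ∃ y ∈ I, (y : A) = aeval u (monomial b (1 : k)))
    {x : weightSubalgebra k δ u} (hx : (x : A) ∈ weightFiltration k δ u r) : x ∈ I := by
  have hle : weightFiltration k δ u r ≤
      (I.restrictScalars k).map (weightSubalgebra k δ u).val.toLinearMap := by
    rw [weightFiltration, restrictSupport_eq_span, Submodule.map_span, Submodule.span_le]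
    rintro _ ⟨_, ⟨b, hb, rfl⟩, rfl⟩
    exact h b hb
  obtain ⟨y, hy, hyx⟩ := hle hx
  rwa [← Subtype.ext hyx]

/-- Dickson's lemma, in `ℕ^σ × ℕ`. -/
theorem exists_finset_forall_le_of_weight_neg [Finite σ] (δ : σ → ℤ) :
    ∃ T : Finset (σ →₀ ℕ), (∀ a ∈ T, Finsupp.weight δ a < 0) ∧
      ∀ b, Finsupp.weight δ b < 0 → ∃ a ∈ T, a ≤ b ∧ Finsupp.weight δ b ≤ Finsupp.weight δ a := by
  let f (b : σ →₀ ℕ) : (σ →₀ ℕ) × ℕ := (b, (-Finsupp.weight δ b).toNat)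
  let S := f '' {b | Finsupp.weight δ b < 0}
  have hfin : {z | Minimal (· ∈ S) z}.Finite :=
    WellQuasiOrderedLE.finite_of_isAntichain (setOfPred_minimal_antichain _)
  refine ⟨(hfin.image Prod.fst).toFinset, fun a ha => ?_, fun b hb => ?_⟩
  · obtain ⟨_, hz, rfl⟩ := (hfin.image Prod.fst).mem_toFinset.1 ha
    obtain ⟨b, hb, rfl⟩ := hz.prop
    exact hb
  · obtain ⟨_, hle, hz⟩ := exists_minimal_le_of_wellFoundedLT (· ∈ S) (f b) ⟨b, hb, rfl⟩
    obtain ⟨a, -, rfl⟩ := hz.prop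
    refine ⟨a, (hfin.image Prod.fst).mem_toFinset.2 ⟨f a, hz, rfl⟩, hle.1, ?_⟩
    have : (-Finsupp.weight δ a).toNat ≤ (-Finsupp.weight δ b).toNat := hle.2
    lia

lemma exists_mul_eq_aeval_monomial {a b : σ →₀ ℕ} (hab : a ≤ b) (ha : Finsupp.weight δ a ≤ 0)
    (hba : Finsupp.weight δ b ≤ Finsupp.weight δ a) :
    ∃ y z : weightSubalgebra k δ u, (y : A) = aeval u (monomial a (1 : k)) ∧
      (z : A) ∈ weightFiltration k δ u (Finsupp.weight δ b - Finsupp.weight δ a) ∧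
        (y * z : A) = aeval u (monomial b (1 : k)) := by
  obtain ⟨c, rfl⟩ := exists_add_of_le hab
  rw [map_add] at hba ⊢
  have hy := aeval_monomial_mem_weightFiltration (u := u) (δ := δ) a (1 : k)
  have hz := aeval_monomial_mem_weightFiltration (u := u) (δ := δ) c (1 : k)
  refine ⟨⟨_, weightFiltration_mono ha hy⟩, ⟨_, weightFiltration_mono (by lia) hz⟩, rfl, ?_, ?_⟩
  · rwa [add_sub_cancel_left]
  · rw [← map_mul, monomial_mul, one_mul]

theorem fg_weightIdeal [Finite σ] : (weightIdeal k δ u).FG := by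
  obtain ⟨T, hT, hle⟩ := exists_finset_forall_le_of_weight_neg δ
  let G : Set (weightSubalgebra k δ u) :=
    (↑) ⁻¹' ((fun a => aeval u (monomial a (1 : k))) '' (T : Set (σ →₀ ℕ)))
  have hG : G.Finite := (T.finite_toSet.image _).preimage Subtype.val_injective.injOn
  suffices weightIdeal k δ u = Ideal.span G by
    rw [this]
    exact Submodule.fg_span hG
  refine le_antisymm (fun x hx => ?_) (Ideal.span_le.2 ?_)
  · refine mem_of_mem_weightFiltration (fun b hb => ?_) (mem_weightIdeal.1 hx)
    obtain ⟨a, haT, hab, hba⟩ := hle b (by lia)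
    obtain ⟨y, z, hy, -, hyz⟩ :=
      exists_mul_eq_aeval_monomial (k := k) (u := u) hab (hT a haT).le hba
    exact ⟨y * z, Ideal.mul_mem_right z _ (Ideal.subset_span ⟨a, haT, hy.symm⟩), hyz⟩
  · rintro x ⟨a, haT, hax⟩
    rw [SetLike.mem_coe, mem_weightIdeal, ← hax]
    have ha0 := hT a haT
    exact weightFiltration_mono (by lia) (aeval_monomial_mem_weightFiltration a 1)

theorem exists_forall_mem_weightIdeal_mul_self [Finite σ] (δ : σ → ℤ) (u : σ → A) :
    ∃ r : ℤ, ∀ x : weightSubalgebra k δ u, (x : A) ∈ weightFiltration k δ u r →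
      x ∈ weightIdeal k δ u * weightIdeal k δ u := by
  obtain ⟨T, hT, hle⟩ := exists_finset_forall_le_of_weight_neg δ
  obtain ⟨R, hR⟩ := (T.finite_toSet.image (Finsupp.weight δ)).bddBelow
  refine ⟨min R 0 - 1, fun x hx => mem_of_mem_weightFiltration (fun b hb => ?_) hx⟩
  obtain ⟨a, haT, hab, hba⟩ := hle b (by lia)
  have haR : R ≤ Finsupp.weight δ a := hR ⟨a, haT, rfl⟩
  have ha0 := hT a haT
  obtain ⟨y, z, hy, hz, hyz⟩ := exists_mul_eq_aeval_monomial (k := k) (u := u) hab ha0.le hba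
  refine ⟨y * z, Ideal.mul_mem_mul ?_ ?_, hyz⟩
  · rw [mem_weightIdeal, hy]
    exact weightFiltration_mono (by lia) (aeval_monomial_mem_weightFiltration a 1)
  · exact mem_weightIdeal.2 (weightFiltration_mono (by lia) hz)

end WeightSubalgebra

section LowerNeighbour

variable {n : ℕ} {k L : Type*} [Field k] [Field L] [Algebra k L] {Γ : SComplex n}
  {J : Ideal (MvPolynomial (Fin (n + 1)) k)} {w : Fin (n + 1) → ℕ} {ξ : Fin (n + 1) → L}
  {i j : Fin (n + 1)} {r : ℤ}

lemma exists_eq_single_of_mem_linkExponents (hΓ : ∀ s ∈ Γ.faces, s.card ≤ 2)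
    {b : Fin (n + 1) →₀ ℕ} (hb : b ∈ linkExponents Γ w j r) (hb0 : b ≠ 0) :
    ∃ i, ∃ m ≠ 0, b = Finsupp.single i m ∧ i ≠ j ∧ {i, j} ∈ Γ.faces := by
  obtain ⟨hbj, hface, -⟩ := hb
  have hcard := hΓ _ hface
  rw [Finset.card_insert_of_notMem (Finsupp.notMem_support_iff.2 hbj)] at hcard
  obtain ⟨i, m, rfl⟩ := Finsupp.card_support_le_one'.1 (Nat.succ_le_succ_iff.1 hcard)
  have hm : m ≠ 0 := Finsupp.single_ne_zero.1 hb0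
  refine ⟨i, m, hm, rfl, ?_, ?_⟩
  · rintro rfl
    exact hm (by simpa using hbj)
  · rwa [Finsupp.support_single i hm, Finset.pair_comm] at hface

lemma linkExponents_zero_subset (hΓ : ∀ s ∈ Γ.faces, s.card ≤ 2) (hwinj : Function.Injective w) :
    linkExponents Γ w j 0 ⊆ {0} := by
  intro b hb
  by_contra hb0
  obtain ⟨i, m, hm, rfl, hij, -⟩ := exists_eq_single_of_mem_linkExponents hΓ hb hb0
  have hmul : (m : ℤ) * relWeight w j i = 0 := by simpa [Finsupp.weight_single] using hb.2.2
  have hwij := hwinj.ne hij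
  rcases mul_eq_zero.1 hmul with h | h
  · exact hm (by exact_mod_cast h)
  · exact hwij (by rw [relWeight] at h; lia)

lemma linkExponents_eq_empty_of_neg (hΓ : ∀ s ∈ Γ.faces, s.card ≤ 2)
    (hj : ∀ l, {l, j} ∈ Γ.faces → w j ≤ w l) (hr : r < 0) : linkExponents Γ w j r = ∅ := by
  refine Set.eq_empty_of_forall_notMem fun b hb => ?_
  have hb0 : b ≠ 0 := by
    rintro rfl
    exact hr.ne' (by simpa using hb.2.2)
  obtain ⟨l, m, -, rfl, -, hface⟩ := exists_eq_single_of_mem_linkExponents hΓ hb hb0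
  have hle : 0 ≤ relWeight w j l := sub_nonneg.2 (by exact_mod_cast hj l hface)
  have hmul : m * relWeight w j l = r := by simpa [Finsupp.weight_single] using hb.2.2
  exact hr.not_ge (hmul ▸ by positivity)

lemma single_mem_linkExponents (hij : i ≠ j) (hface : {i, j} ∈ Γ.faces) (m : ℕ) :
    Finsupp.single i m ∈ linkExponents Γ w j (m * relWeight w j i) := by
  refine ⟨Finsupp.single_eq_of_ne hij.symm, Γ.down_closed hface ?_, by
    simp [Finsupp.weight_single]⟩
  rw [Finset.pair_comm]
  exact Finset.insert_subset_insert j Finsupp.support_single_subset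

lemma weightSubalgebra_le_chart :
    weightSubalgebra k (relWeight w j) (fun l => ξ l / ξ j) ≤ chart k ξ j := by
  rintro _ ⟨p, -, rfl⟩
  exact ⟨p, rfl⟩

namespace IsWeightDegeneration

variable (hw : IsWeightDegeneration Γ J w) (hξ : IsGenericCoordinates J ξ)
include hw hξ

lemma one_notMem_vertexFiltration (hj : {j} ∈ Γ.faces) : 1 ∉ vertexFiltration k w ξ j (-1) := by
  intro h
  refine one_ne_zero (hw.eq_zero_of_aeval_mem_vertexFiltration hξ
    (p := (1 : MvPolynomial (Fin (n + 1)) k)) (j := j) (r := 0) (fun b hb => ?_) ?_)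
  · rw [support_one, Finset.mem_singleton] at hb
    subst hb
    exact ⟨rfl, by simpa using hj, map_zero _⟩
  · simpa using h

variable (hhom : IsHomog J)
include hhom

theorem mem_weightSubalgebra_of_isIntegral [IsDedekindDomain (chart k ξ j)] {x : L}
    (hx : IsIntegral (weightSubalgebra k (relWeight w j) fun l => ξ l / ξ j) x) :
    x ∈ weightSubalgebra k (relWeight w j) fun l => ξ l / ξ j := by
  have := hξ.isFractionRing_chart j
  have hchart : IsIntegral (chart k ξ j) x :=
    hx.map_of_comp_eq (Subalgebra.inclusion weightSubalgebra_le_chart).toRingHom (.id L) rfl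
  obtain ⟨⟨_, p, rfl⟩, rfl⟩ := IsIntegrallyClosed.isIntegral_iff.1 hchart
  obtain ⟨r, hr⟩ := exists_mem_weightFiltration (δ := relWeight w j) (u := fun l => ξ l / ξ j) p
  have hdescend (m : ℕ) : aeval (fun l => ξ l / ξ j) p ∈ vertexFiltration k w ξ j m →
      aeval (fun l => ξ l / ξ j) p ∈ vertexFiltration k w ξ j 0 := by
    induction m with
    | zero => exact id
    | succ m ih =>
      intro hm
      obtain ⟨N, hN⟩ := exists_pow_mem_weightFiltration_of_isIntegral hx hm (by positivity)
      refine ih ?_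
      simpa using hw.mem_vertexFiltration_of_pow_mem hξ hhom hm hN
  exact hdescend r.toNat (weightFiltration_mono (Int.self_le_toNat r) hr)

lemma exists_sub_algebraMap_mem_vertexFiltration (hΓ : ∀ s ∈ Γ.faces, s.card ≤ 2) {x : L}
    (hx : x ∈ vertexFiltration k w ξ j 0) (hx' : x ∉ vertexFiltration k w ξ j (-1)) :
    ∃ c : k, c ≠ 0 ∧ x - algebraMap k L c ∈ vertexFiltration k w ξ j (-1) := by
  obtain ⟨p, hp, hxp⟩ := hw.exists_sub_aeval_mem_vertexFiltration hξ hhom hx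
  obtain ⟨c, rfl⟩ : ∃ c, p = C c := by
    refine ⟨p.coeff 0, ?_⟩
    ext b
    by_cases hb : b = 0
    · simp [hb]
    · rw [coeff_C, if_neg (Ne.symm hb), ← notMem_support_iff]
      exact fun hbp => hb (linkExponents_zero_subset hΓ hw.weight_injective (hp b hbp))
  rw [aeval_C, zero_sub] at hxp
  exact ⟨c, fun hc => hx' (by simpa [hc] using hxp), hxp⟩

theorem exists_lower_neighbour (hΓ : ∀ s ∈ Γ.faces, s.card ≤ 2) (hj : {j} ∈ Γ.faces)
    (hij : w i < w j) :
    ∃ l, {l, j} ∈ Γ.faces ∧ w l < w j := by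
  by_contra! hnone
  have hstable (N : ℕ) : vertexFiltration k w ξ j (-1) ≤ vertexFiltration k w ξ j (-1 - N) := by
    induction N with
    | zero => simp
    | succ N ih =>
      refine ih.trans ((hw.vertexFiltration_le hξ hhom j _).trans (sup_le ?_ ?_))
      · simp [linkExponents_eq_empty_of_neg hΓ hnone (show -1 - (N : ℤ) < 0 by lia),
          restrictSupport_eq_span]
      · exact weightFiltration_mono (by push_cast; lia)
  let M := weightIdeal k (relWeight w j) fun l => ξ l / ξ j
  obtain ⟨r, hrM⟩ := exists_forall_mem_weightIdeal_mul_self (k := k) (relWeight w j)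
    fun l => ξ l / ξ j
  have hidem : IsIdempotentElem M := le_antisymm Ideal.mul_le_left fun x hx =>
    hrM x (weightFiltration_mono (by lia) (hstable (-r).toNat (mem_weightIdeal.1 hx)))
  rcases (Ideal.isIdempotentElem_iff_eq_bot_or_top M fg_weightIdeal).1 hidem with hM | hM
  · have hi : ξ i / ξ j ∈ vertexFiltration k w ξ j (-1) :=
      weightFiltration_mono (by rw [relWeight]; lia) (mem_weightFiltration_self i)
    let x : weightSubalgebra k (relWeight w j) fun l => ξ l / ξ j :=
      ⟨ξ i / ξ j, weightFiltration_mono (by lia) hi⟩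
    have hx : x ∈ M := mem_weightIdeal.2 hi
    rw [hM, Ideal.mem_bot] at hx
    exact div_ne_zero (hξ.ne_zero i) (hξ.ne_zero j) (congrArg Subtype.val hx)
  · exact hw.one_notMem_vertexFiltration hξ hj
      (mem_weightIdeal.1 ((Ideal.eq_top_iff_one M).1 hM))

end IsWeightDegeneration

end LowerNeighbour

section UniqueLowerNeighbour

open WithZero

lemma mem_nonunits_valuationSubring {L : Type*} [Field L] (v : Valuation L ℤᵐ⁰) {x : L} :
    x ∈ v.valuationSubring.nonunits ↔ v x < 1 := by
  rw [ValuationSubring.mem_nonunits_iff]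
  exact (Valuation.isEquiv_valuation_valuationSubring v).lt_one_iff_lt_one.symm

/-- The ratio `log (v y) / log (v x)` is maximal at some `v`; clear its denominator there. -/
lemma exists_forall_pow_le_pow {L : Type*} [Field L] {T : Set (Valuation L ℤᵐ⁰)} (hT : T.Finite)
    (hne : T.Nonempty) {x y : L} (hx : x ≠ 0) (hy : y ≠ 0) (hx1 : ∀ v ∈ T, v x < 1)
    (hy1 : ∀ v ∈ T, v y < 1) :
    ∃ p ≠ 0, ∃ q, (∀ v ∈ T, v x ^ p ≤ v y ^ q) ∧ ∃ v ∈ T, v x ^ p = v y ^ q := by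
  have hexp {z : L} (hz : z ≠ 0) {v : Valuation L ℤᵐ⁰} (hz1 : v z < 1) :
      ∃ a : ℕ, 0 < a ∧ v z = exp (-a : ℤ) := by
    have hvz : v z ≠ 0 := (map_ne_zero v).2 hz
    have hneg : log (v z) < 0 := by rwa [log_lt_iff_lt_exp hvz, exp_zero]
    exact ⟨(log (v z)).natAbs, by lia, by
      rw [show -((log (v z)).natAbs : ℤ) = log (v z) by lia, exp_log hvz]⟩
  choose! a ha0 ha using fun v hv => hexp hx (hx1 v hv)
  choose! b hb0 hb using fun v hv => hexp hy (hy1 v hv)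
  obtain ⟨v₀, hv₀, hmax⟩ := Set.exists_max_image T (fun v => (b v : ℚ) / a v) hT hne
  refine ⟨b v₀, (hb0 v₀ hv₀).ne', a v₀, fun v hv => ?_, v₀, hv₀, ?_⟩
  · have hle := hmax v hv
    rw [div_le_div_iff₀ (by exact_mod_cast ha0 v hv) (by exact_mod_cast ha0 v₀ hv₀)] at hle
    rw [ha v hv, hb v hv, ← exp_nsmul, ← exp_nsmul, exp_le_exp, nsmul_eq_mul, nsmul_eq_mul,
      mul_neg, mul_neg, neg_le_neg_iff, mul_comm]
    exact_mod_cast hle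
  · rw [ha v₀ hv₀, hb v₀ hv₀, ← exp_nsmul, ← exp_nsmul, nsmul_eq_mul, nsmul_eq_mul, mul_neg,
      mul_neg, mul_comm]

lemma not_valuation_lt_one_of_notMem {L : Type*} [Field L] {B : Subring L} {M : Ideal B}
    (hM : M.IsMaximal) {v : Valuation L ℤᵐ⁰} (hB : B ≤ v.valuationSubring.toSubring)
    (hv : ∀ a ∈ M, v a < 1) {s : B} (hs : s ∉ M) : ¬ v s < 1 := by
  intro hs1
  obtain ⟨t, a, ha, hta⟩ := hM.exists_inv hs
  have hlt : v (t * s + a) < 1 := by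
    refine (v.map_add _ _).trans_lt (max_lt ?_ (hv a ha))
    rw [map_mul]
    exact mul_lt_one_of_nonneg_of_lt_one_right (hB t.2) zero_le hs1
  have hone : (t * s + a : L) = 1 := congrArg Subtype.val hta
  exact hlt.ne (by rw [hone, map_one])

theorem exists_mul_pow_eq_mul_pow {L : Type*} [Field L] (B : Subring L)
    (hB : ∀ x : L, IsIntegral B x → x ∈ B) {M : Ideal B} (hM : M.IsMaximal)
    {T : Set (Valuation L ℤᵐ⁰)} (hT : T.Finite)
    (hdom : ∀ V : ValuationSubring L, B ≤ V.toSubring → (∀ a ∈ M, (a : L) ∈ V.nonunits) →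
      ∃ v ∈ T, v.valuationSubring = V)
    {x y : B} (hx : x ∈ M) (hy : y ∈ M) (hx0 : x ≠ 0) (hy0 : y ≠ 0) :
    ∃ p ≠ 0, ∃ q, ∃ s ∉ M, ∃ t ∉ M, s * x ^ p = t * y ^ q := by
  let T' := {v ∈ T | B ≤ v.valuationSubring.toSubring ∧ ∀ a ∈ M, v a < 1}
  have hmem {V : ValuationSubring L} (hBV : B ≤ V.toSubring)
      (hMV : ∀ a ∈ M, (a : L) ∈ V.nonunits) : ∃ v ∈ T', v.valuationSubring = V := by
    obtain ⟨v, hvT, rfl⟩ := hdom V hBV hMV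
    exact ⟨v, ⟨hvT, hBV, fun a ha => (mem_nonunits_valuationSubring v).1 (hMV a ha)⟩, rfl⟩
  have hne : T'.Nonempty := by
    obtain ⟨V, hBV, hMV⟩ := Ideal.image_subset_nonunits_valuationSubring M hM.ne_top
    obtain ⟨v, hv, -⟩ := hmem hBV fun a ha => hMV ⟨a, ha, rfl⟩
    exact ⟨v, hv⟩
  have hxL : (x : L) ≠ 0 := Subtype.coe_ne_coe.2 hx0
  have hyL : (y : L) ≠ 0 := Subtype.coe_ne_coe.2 hy0
  obtain ⟨p, hp, q, hle, v₀, hv₀, heq⟩ := exists_forall_pow_le_pow (hT.subset (Set.sep_subset ..))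
    hne hxL hyL (fun v hv => hv.2.2 x hx) (fun v hv => hv.2.2 y hy)
  obtain ⟨s, hs, hint⟩ := exists_notMem_isIntegral_mul B hM.ne_top (x := (x : L) ^ p / (y : L) ^ q)
    fun V hBV hMV => by
      obtain ⟨v, hv, rfl⟩ := hmem hBV hMV
      rw [Valuation.mem_valuationSubring_iff, map_div₀, map_pow, map_pow]
      exact div_le_one_of_le₀ (hle v hv) zero_le
  let t : B := ⟨_, hB _ hint⟩
  refine ⟨p, hp, q, s, hs, t, fun ht => ?_, ?_⟩
  · have hst : v₀ t = v₀ s := by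
      rw [show (t : L) = s * ((x : L) ^ p / (y : L) ^ q) from rfl, map_mul, map_div₀, map_pow,
        map_pow, heq, div_self (pow_ne_zero _ ((map_ne_zero v₀).2 hyL)), mul_one]
    exact not_valuation_lt_one_of_notMem hM hv₀.2.1 hv₀.2.2 hs (hst ▸ hv₀.2.2 t ht)
  · ext
    push_cast
    rw [show (t : L) = s * ((x : L) ^ p / (y : L) ^ q) from rfl, mul_assoc,
      div_mul_cancel₀ _ (pow_ne_zero q hyL)]

variable {n : ℕ} {k L : Type*} [Field k] [Field L] [Algebra k L] {Γ : SComplex n}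
  {J : Ideal (MvPolynomial (Fin (n + 1)) k)} {w : Fin (n + 1) → ℕ} {ξ : Fin (n + 1) → L}
  {i i' j : Fin (n + 1)}

namespace IsWeightDegeneration

variable (hw : IsWeightDegeneration Γ J w) (hξ : IsGenericCoordinates J ξ) (hhom : IsHomog J)
  (hΓ : ∀ s ∈ Γ.faces, s.card ≤ 2)
include hw hξ hhom hΓ

lemma isMaximal_weightIdeal (hj : {j} ∈ Γ.faces) :
    (weightIdeal k (relWeight w j) fun l => ξ l / ξ j).IsMaximal := by
  rw [Ideal.isMaximal_iff]
  refine ⟨fun h => hw.one_notMem_vertexFiltration hξ hj (mem_weightIdeal.1 h), ?_⟩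
  intro I x hI hx hxI
  obtain ⟨c, hc, hxc⟩ := hw.exists_sub_algebraMap_mem_vertexFiltration hξ hhom hΓ x.2
    fun h => hx (mem_weightIdeal.2 h)
  have hxcM : x - algebraMap k _ c ∈ weightIdeal k (relWeight w j) fun l => ξ l / ξ j :=
    mem_weightIdeal.2 hxc
  have hcI : algebraMap k _ c ∈ I := by simpa using I.sub_mem hxI (hI hxcM)
  simpa [← map_mul, inv_mul_cancel₀ hc] using I.mul_mem_left (algebraMap k _ c⁻¹) hcI

theorem mul_aeval_monomial_ne_mul_aeval_monomial {b b' : Fin (n + 1) →₀ ℕ} {r r' : ℤ}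
    (hb : b ∈ linkExponents Γ w j r) (hb' : b' ∈ linkExponents Γ w j r') (hne : b ≠ b') {s t : L}
    (hs : s ∈ vertexFiltration k w ξ j 0) (hs' : s ∉ vertexFiltration k w ξ j (-1))
    (ht : t ∈ vertexFiltration k w ξ j 0) (ht' : t ∉ vertexFiltration k w ξ j (-1)) :
    s * aeval (fun l => ξ l / ξ j) (monomial b (1 : k)) ≠
      t * aeval (fun l => ξ l / ξ j) (monomial b' (1 : k)) := by
  wlog hrr : r' ≤ r generalizing b b' r r' s t
  · exact (this hb' hb hne.symm ht ht' hs hs' (le_of_not_ge hrr)).symm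
  intro heq
  let u := fun l => ξ l / ξ j
  obtain ⟨c, hc, hsc⟩ := hw.exists_sub_algebraMap_mem_vertexFiltration hξ hhom hΓ hs hs'
  obtain ⟨d, htd, hd⟩ : ∃ d : k, t * aeval u (monomial b' (1 : k)) - aeval u (monomial b' d) ∈
      vertexFiltration k w ξ j (r - 1) ∧ (d ≠ 0 → b' ∈ linkExponents Γ w j r) := by
    rcases hrr.eq_or_lt with rfl | hlt
    · obtain ⟨d, -, htd⟩ := hw.exists_sub_algebraMap_mem_vertexFiltration hξ hhom hΓ ht ht'
      exact ⟨d, mul_aeval_monomial_sub_mem_weightFiltration htd hb'.2.2, fun _ => hb'⟩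
    · refine ⟨0, ?_, fun h => absurd rfl h⟩
      have hmul := mul_mem_weightFiltration ht (aeval_monomial_mem_weightFiltration b' (1 : k))
      rw [monomial_zero, map_zero, sub_zero]
      exact weightFiltration_mono (by rw [hb'.2.2]; lia) hmul
  have hzero : monomial b c - monomial b' d = 0 := by
    refine hw.eq_zero_of_aeval_mem_vertexFiltration hξ (j := j) (r := r) (fun e he => ?_) ?_
    · classical
      rcases Finset.mem_union.1 (support_sub _ _ _ he) with he | he
      · rwa [Finset.mem_singleton.1 (support_monomial_subset he)]
      · rw [support_monomial] at he
        split_ifs at he with hd0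
        · simp at he
        · rw [Finset.mem_singleton.1 he]
          exact hd hd0
    · rw [map_sub]
      convert sub_mem htd (mul_aeval_monomial_sub_mem_weightFiltration hsc hb.2.2) using 1
      rw [heq]
      abel
  exact hc (by simpa [coeff_monomial, hne.symm] using congrArg (coeff b) hzero)

theorem lower_neighbour_unique (hD : ∀ l, IsDedekindDomain (chart k ξ l))
    (hface : {i, j} ∈ Γ.faces) (hij : w i < w j) (hface' : {i', j} ∈ Γ.faces) (hij' : w i' < w j) :
    i = i' := by
  by_contra hne
  have hj : {j} ∈ Γ.faces := Γ.down_closed hface (by simp)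
  have hmem {l : Fin (n + 1)} (hl : w l < w j) : ξ l / ξ j ∈ vertexFiltration k w ξ j (-1) :=
    weightFiltration_mono (by rw [relWeight]; lia) (mem_weightFiltration_self l)
  have hne0 (l : Fin (n + 1)) : ξ l / ξ j ≠ 0 := div_ne_zero (hξ.ne_zero l) (hξ.ne_zero j)
  let B := weightSubalgebra k (relWeight w j) fun l => ξ l / ξ j
  let x : B := ⟨ξ i / ξ j, weightFiltration_mono (by lia) (hmem hij)⟩
  let x' : B := ⟨ξ i' / ξ j, weightFiltration_mono (by lia) (hmem hij')⟩
  obtain ⟨T, hT, hTV⟩ := hξ.exists_finite_valuations hD (hne0 i)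
  obtain ⟨p, hp, q, s, hs, t, ht, heq⟩ := exists_mul_pow_eq_mul_pow B.toSubring
    (fun z => hw.mem_weightSubalgebra_of_isIntegral hξ hhom)
    (hw.isMaximal_weightIdeal hξ hhom hΓ hj) hT
    (fun V hBV hMV => hTV V (fun c => hBV (B.algebraMap_mem c))
      (hMV x (mem_weightIdeal.2 (hmem hij))))
    (x := x) (y := x') (mem_weightIdeal.2 (hmem hij)) (mem_weightIdeal.2 (hmem hij'))
    (Subtype.coe_ne_coe.1 (hne0 i)) (Subtype.coe_ne_coe.1 (hne0 i'))
  refine hw.mul_aeval_monomial_ne_mul_aeval_monomial hξ hhom hΓ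
    (single_mem_linkExponents (ne_of_apply_ne w hij.ne) hface p)
    (single_mem_linkExponents (ne_of_apply_ne w hij'.ne) hface' q) ?_
    s.2 (fun h => hs (mem_weightIdeal.2 h)) t.2 (fun h => ht (mem_weightIdeal.2 h)) ?_
  · rw [Ne, Finsupp.single_eq_single_iff]
    tauto
  · simpa [aeval_monomial] using congrArg Subtype.val heq

end IsWeightDegeneration

end UniqueLowerNeighbour

section Tree

variable {V α : Type*} [LinearOrder α] {G : SimpleGraph V} {w : V → α} {root : V}

lemma connected_of_exists_adj_lt [WellFoundedLT α]
    (hparent : ∀ v ≠ root, ∃ u, G.Adj u v ∧ w u < w v) : G.Connected := by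
  have hreach (v : V) : G.Reachable root v := by
    induction v using (InvImage.wf w wellFounded_lt).induction with
    | _ v ih =>
      by_cases hv : v = root
      · rw [hv]
      · obtain ⟨u, hadj, hlt⟩ := hparent v hv
        exact (ih u hlt).trans hadj.reachable
  exact { preconnected := fun u v => (hreach u).symm.trans (hreach v), nonempty := ⟨root⟩ }

lemma card_edgeSet_add_one_of_existsUnique_adj_lt [Finite V] (hw : Function.Injective w)
    (hroot : ∀ v, w root ≤ w v) (hparent : ∀ v ≠ root, ∃! u, G.Adj u v ∧ w u < w v) :
    Nat.card G.edgeSet + 1 = Nat.card V := by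
  choose parent hadj_lt hunique using fun v : {v // v ≠ root} => hparent v v.2
  let edge : {v // v ≠ root} → G.edgeSet := fun v => ⟨s(parent v, v), (hadj_lt v).1⟩
  have hedge {u v : V} (huv : G.Adj u v) (hlt : w u < w v) : ∃ x, (edge x : Sym2 V) = s(u, v) := by
    have hv : v ≠ root := by
      rintro rfl
      exact (hroot u).not_gt hlt
    exact ⟨⟨v, hv⟩, congrArg (s(·, v)) (hunique ⟨v, hv⟩ u ⟨huv, hlt⟩).symm⟩
  have hbij : Function.Bijective edge := by
    refine ⟨fun u v huv => ?_, ?_⟩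
    · rcases Sym2.eq_iff.1 (congrArg Subtype.val huv) with ⟨-, h⟩ | ⟨hu, hv⟩
      · exact Subtype.ext h
      · have hu_lt := (hadj_lt u).2
        have hv_lt := (hadj_lt v).2
        rw [hu] at hu_lt
        rw [← hv] at hv_lt
        exact absurd hu_lt hv_lt.asymm
    · rintro ⟨⟨u, v⟩, huv : G.Adj u v⟩
      rcases (hw.ne huv.ne).lt_or_gt with hlt | hlt
      · obtain ⟨x, hx⟩ := hedge huv hlt
        exact ⟨x, Subtype.ext hx⟩
      · obtain ⟨x, hx⟩ := hedge huv.symm hlt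
        exact ⟨x, Subtype.ext (hx.trans Sym2.eq_swap)⟩
  classical
  rw [← Nat.card_congr (Equiv.ofBijective edge hbij),
    ← Nat.card_congr (Equiv.optionSubtypeNe root), Finite.card_option]

theorem isTree_of_existsUnique_adj_lt [WellFoundedLT α] [Finite V] (hw : Function.Injective w)
    (hroot : ∀ v, w root ≤ w v) (hparent : ∀ v ≠ root, ∃! u, G.Adj u v ∧ w u < w v) :
    G.IsTree :=
  SimpleGraph.isTree_iff_connected_and_card.2
    ⟨connected_of_exists_adj_lt fun v hv => (hparent v hv).exists,
      card_edgeSet_add_one_of_existsUnique_adj_lt hw hroot hparent⟩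

end Tree

section GraphOfComplex

variable {n : ℕ} {Γ : SComplex n}

lemma SComplex.graph_adj {i j : Fin (n + 1)} : Γ.graph.Adj i j ↔ i ≠ j ∧ {i, j} ∈ Γ.faces := by
  rw [SComplex.graph, SimpleGraph.fromRel_adj, Finset.pair_comm j i, or_self]

lemma SComplex.IsGraph.one_le (hΓ : Γ.IsGraph) : 1 ≤ n := by
  obtain ⟨s, -, hs⟩ := hΓ.2
  simpa [hs] using Finset.card_le_univ s

theorem IsWeightDegeneration.isTree_graph {k L : Type*} [Field k] [Field L] [Algebra k L]
    {J : Ideal (MvPolynomial (Fin (n + 1)) k)} {w : Fin (n + 1) → ℕ} {ξ : Fin (n + 1) → L}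
    (hw : IsWeightDegeneration Γ J w) (hξ : IsGenericCoordinates J ξ) (hhom : IsHomog J)
    (hΓ : ∀ s ∈ Γ.faces, s.card ≤ 2) (hvert : ∀ i, {i} ∈ Γ.faces)
    (hD : ∀ i, IsDedekindDomain (chart k ξ i)) : Γ.graph.IsTree := by
  obtain ⟨root, hroot⟩ := Finite.exists_min w
  refine isTree_of_existsUnique_adj_lt hw.weight_injective hroot fun v hv => ?_
  have hlt : w root < w v := (hroot v).lt_of_ne (hw.weight_injective.ne hv.symm)
  obtain ⟨u, hface, hu⟩ := hw.exists_lower_neighbour hξ hhom hΓ (hvert v) hlt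
  refine ⟨u, ⟨SComplex.graph_adj.2 ⟨ne_of_apply_ne w hu.ne, hface⟩, hu⟩, fun u' hu' => ?_⟩
  exact hw.lower_neighbour_unique hξ hhom hΓ hD (SComplex.graph_adj.1 hu'.1).2 hu'.2 hface hu

end GraphOfComplex

/-- **Statement 2.** If a graph `Γ` on `{0, …, n}` is Gröbner smoothable over some field `K`,
then `Γ` is a tree. -/
theorem tree_of_groebnerSmoothable {K : Type*} [Field K] {n : ℕ}
    (Γ : SComplex n) (hgraph : Γ.IsGraph)
    (hvert : ∀ i : Fin (n + 1), ({i} : Finset (Fin (n + 1))) ∈ Γ.faces)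
    (h : GroebnerSmoothable K Γ) :
    Γ.graph.IsTree := by
  obtain ⟨J, hhom, m, hin, hconn, hrank⟩ := h
  let J' := J.map (MvPolynomial.map (algebraMap K (AlgebraicClosure K)))
  have hhom' : IsHomog J' := hhom.map
  have hin' : initialIdeal m J' = Γ.srIdeal (AlgebraicClosure K) := initialIdeal_map_eq_srIdeal hin
  obtain ⟨w, hw⟩ := exists_isWeightDegeneration hin' hhom'
  have hprime : J'.IsPrime :=
    isPrime_of_isConnectedProjVariety hgraph.one_le hhom' (hw.isRadical hin') hrank hconn
  obtain ⟨L, _, _, ξ, hξ⟩ := exists_isGenericCoordinates fun i => hw.X_notMem (hvert i)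
  exact hw.isTree_graph hξ hhom' hgraph.1 hvert fun i =>
    hξ.isDedekindDomain_chart hgraph.one_le hhom' hrank i
end

section
/- Let S = K[X_0,…,X_n], < a monomial order with X_0 > ⋯ > X_n, and I ⊆ S a homogeneous ideal with in_<(I) = I_Δ squarefree. Suppose v ∈ {0,…,n} satisfies {v} ∉ Δ, so X_v ∈ in_<(I) and there is a linear form ℓ = X_v + Σ_{i>v} λ_i X_i ∈ I with λ_i ∈ K. Then the image of any Gröbner basis of I under the substitution X_v ↦ −Σ_{i>v} λ_i X_i is a Gröbner basis of the image ideal I' = I/ℓS ⊆ S' = K[X_j : j ∈ {0,…,n} \ {v}] with respect to the restricted monomial order <', and in_{<'}(I') = I_Δ, where Δ is now regarded as a simplicial complex on the vertex set {0,…,n} \ {v}. -/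
open MvPolynomial

/-- `G` is a Gröbner basis of `I` w.r.t. `m`: a set of nonzero elements of `I` whose leading
monomials generate the initial ideal of `I`. -/
def IsGroebnerBasis {σ : Type*} {K : Type*} [Field K] (m : MonomialOrder σ)
    (I : Ideal (MvPolynomial σ K)) (G : Set (MvPolynomial σ K)) : Prop :=
  G ⊆ (I : Set (MvPolynomial σ K)) ∧ (0 : MvPolynomial σ K) ∉ G ∧
    initialIdeal m I = Ideal.span ((fun g => monomial (m.mdeg g) (1 : K)) '' G)

/-- A monomial order on `X_0, …, X_n` satisfies `X_0 > X_1 > ⋯ > X_n`. -/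
def MonomialOrder.Descending {n : ℕ} (m : MonomialOrder (Fin (n + 1))) : Prop :=
  ∀ i j : Fin (n + 1), i < j →
    m.toSyn (Finsupp.single j 1) < m.toSyn (Finsupp.single i 1)

/-- The Stanley–Reisner ideal of `Δ`, regarded as a simplicial complex on the smaller vertex
set `{0, …, n} \ {v}`, inside the smaller polynomial ring. -/
noncomputable def srIdealAway {n : ℕ} (K : Type*) [Field K] (Δ : SComplex n) (v : Fin (n + 1)) :
    Ideal (MvPolynomial {i : Fin (n + 1) // i ≠ v} K) :=
  Ideal.span {g | ∃ s : Finset {i : Fin (n + 1) // i ≠ v},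
    s.map (Function.Embedding.subtype fun i => i ≠ v) ∉ Δ.faces ∧ g = ∏ i ∈ s, X i}

/-- The substitution `X_v ↦ -∑_{i > v} λ_i X_i` (and `X_j ↦ X_j` for `j ≠ v`), as an algebra
map onto the polynomial ring `K[X_j : j ≠ v]`; it realizes the quotient `S → S/ℓS`. -/
noncomputable def substMap {n : ℕ} {K : Type*} [Field K] (v : Fin (n + 1))
    (lam : Fin (n + 1) → K) :
    MvPolynomial (Fin (n + 1)) K →ₐ[K] MvPolynomial {i : Fin (n + 1) // i ≠ v} K :=
  aeval fun i =>
    if h : i = v then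
      -(∑ j : Fin (n + 1), if hj : v < j then
          C (lam j) * X (⟨j, (ne_of_lt hj).symm⟩ : {i : Fin (n + 1) // i ≠ v}) else 0)
    else X (⟨i, h⟩ : {i : Fin (n + 1) // i ≠ v})

/-!
Write `e : τ ↪ σ` for the inclusion of the variables that remain, and view the substitution `φ`
as the endomorphism `ψ = rename e ∘ φ` of `K[σ]`. Then `ψ` never increases the leading exponent,
because `X_v` is replaced by smaller variables, and alters a polynomial only by an element of `I`,
because `X_v - ψ X_v = ℓ ∈ I`. Hence `rename e` maps `I' = φ(I)` into `I` and preserves leading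
exponents, so `in(I')` lies in the contraction of `in(I)` along `rename e`. Conversely, a monomial
of the contraction is divisible by the leading monomial of some `g ∈ G` in which `X_v` does not
occur; `ψ` fixes that monomial and makes no other monomial of `g` reach it, so `φ g` has the same
leading monomial. The contraction of `I_Δ` is the Stanley–Reisner ideal of `Δ` on the remaining
vertices.
-/

open scoped MonomialOrder

section DegreeNonincreasing

variable {σ R : Type*} [CommSemiring R] {m : MonomialOrder σ}
  {ψ : MvPolynomial σ R →ₐ[R] MvPolynomial σ R}

lemma algHom_monomial_eq_self {d : σ →₀ ℕ} (hfix : ∀ i ∈ d.support, ψ (X i) = X i) (a : R) :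
    ψ (monomial d a) = monomial d a := by
  rw [monomial_eq, map_mul, map_finsuppProd, algHom_C, algebraMap_eq]
  congr 1
  exact Finsupp.prod_congr fun i hi => by rw [map_pow, hfix i hi]

lemma degree_algHom_monomial_le (hψ : ∀ i, m.degree (ψ (X i)) ≼[m] Finsupp.single i 1)
    (d : σ →₀ ℕ) (a : R) : m.degree (ψ (monomial d a)) ≼[m] d := by
  have hpow (i : σ) : m.degree (ψ (X i) ^ d i) ≼[m] Finsupp.single i (d i) :=
    calc m.toSyn (m.degree (ψ (X i) ^ d i))
        ≤ m.toSyn (d i • m.degree (ψ (X i))) := m.degree_pow_le _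
      _ = d i • m.toSyn (m.degree (ψ (X i))) := map_nsmul _ _ _
      _ ≤ d i • m.toSyn (Finsupp.single i 1) := nsmul_le_nsmul_right (hψ i) _
      _ = m.toSyn (Finsupp.single i (d i)) := by simp [← map_nsmul]
  have hmap : ψ (monomial d a) = a • ∏ i ∈ d.support, ψ (X i) ^ d i := by
    rw [monomial_eq, ← smul_eq_C_mul, map_smul, map_finsuppProd, Finsupp.prod]
    simp only [map_pow]
  calc m.toSyn (m.degree (ψ (monomial d a)))
      ≤ m.toSyn (m.degree (∏ i ∈ d.support, ψ (X i) ^ d i)) := hmap ▸ m.degree_smul_le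
    _ ≤ m.toSyn (∑ i ∈ d.support, m.degree (ψ (X i) ^ d i)) := m.degree_prod_le
    _ = ∑ i ∈ d.support, m.toSyn (m.degree (ψ (X i) ^ d i)) := map_sum _ _ _
    _ ≤ ∑ i ∈ d.support, m.toSyn (Finsupp.single i (d i)) := Finset.sum_le_sum fun i _ => hpow i
    _ = m.toSyn d := by rw [← map_sum]; exact congrArg m.toSyn d.sum_single

lemma algHom_eq_sum_support (f : MvPolynomial σ R) :
    ψ f = ∑ d ∈ f.support, ψ (monomial d (coeff d f)) := by
  conv_lhs => rw [f.as_sum, map_sum]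

lemma degree_algHom_le (hψ : ∀ i, m.degree (ψ (X i)) ≼[m] Finsupp.single i 1)
    (f : MvPolynomial σ R) : m.degree (ψ f) ≼[m] m.degree f := by
  rw [algHom_eq_sum_support f]
  exact m.degree_sum_le.trans <| Finset.sup_le fun d hd =>
    (degree_algHom_monomial_le hψ d _).trans (m.le_degree hd)

lemma coeff_degree_algHom (hψ : ∀ i, m.degree (ψ (X i)) ≼[m] Finsupp.single i 1)
    {f : MvPolynomial σ R} (hfix : ∀ i ∈ (m.degree f).support, ψ (X i) = X i) :
    coeff (m.degree f) (ψ f) = m.leadingCoeff f := by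
  classical
  rw [algHom_eq_sum_support f, coeff_sum, Finset.sum_eq_single (m.degree f)]
  · rw [algHom_monomial_eq_self hfix, coeff_monomial, if_pos rfl, MonomialOrder.leadingCoeff]
  · intro d hd hne
    have hlt : d ≺[m] m.degree f := (m.le_degree hd).lt_of_ne (m.toSyn.injective.ne hne)
    exact m.coeff_eq_zero_of_lt ((degree_algHom_monomial_le hψ d _).trans_lt hlt)
  · intro hnot
    rw [notMem_support_iff.mp hnot, monomial_zero, map_zero, coeff_zero]

lemma algHom_ne_zero_of_fixes_degree (hψ : ∀ i, m.degree (ψ (X i)) ≼[m] Finsupp.single i 1)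
    {f : MvPolynomial σ R} (hf : f ≠ 0) (hfix : ∀ i ∈ (m.degree f).support, ψ (X i) = X i) :
    ψ f ≠ 0 := by
  intro hzero
  have hcoeff := coeff_degree_algHom hψ hfix
  rw [hzero, coeff_zero] at hcoeff
  exact m.leadingCoeff_ne_zero_iff.mpr hf hcoeff.symm

lemma degree_algHom_eq_self (hψ : ∀ i, m.degree (ψ (X i)) ≼[m] Finsupp.single i 1)
    {f : MvPolynomial σ R} (hf : f ≠ 0) (hfix : ∀ i ∈ (m.degree f).support, ψ (X i) = X i) :
    m.degree (ψ f) = m.degree f := by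
  refine m.toSyn.injective ((degree_algHom_le hψ f).antisymm (m.le_degree ?_))
  rw [mem_support_iff, coeff_degree_algHom hψ hfix]
  exact m.leadingCoeff_ne_zero_iff.mpr hf

end DegreeNonincreasing

lemma sub_algHom_mem {σ R : Type*} [CommRing R] {I : Ideal (MvPolynomial σ R)}
    {ψ : MvPolynomial σ R →ₐ[R] MvPolynomial σ R} (hI : ∀ i, X i - ψ (X i) ∈ I)
    (f : MvPolynomial σ R) : f - ψ f ∈ I := by
  have hmk : Ideal.Quotient.mkₐ R I = (Ideal.Quotient.mkₐ R I).comp ψ :=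
    algHom_ext fun i => Ideal.Quotient.eq.mpr (hI i)
  exact Ideal.Quotient.eq.mp (DFunLike.congr_fun hmk f)

section MonomialIdeals

variable {σ : Type*}

lemma mem_span_monomial_mdeg_iff {R : Type*} [CommSemiring R] {m : MonomialOrder σ}
    {F : Set (MvPolynomial σ R)} {q : MvPolynomial σ R} :
    q ∈ Ideal.span ((fun f => monomial (m.mdeg f) (1 : R)) '' F) ↔
      ∀ d ∈ q.support, ∃ f ∈ F, m.degree f ≤ d := by
  have himage : (fun f => monomial (m.mdeg f) (1 : R)) '' F =
      (fun d => monomial d (1 : R)) '' (m.degree '' F) := by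
    rw [Set.image_image]; rfl
  rw [himage, mem_ideal_span_monomial_image]
  simp only [Set.exists_mem_image]

lemma mem_initialIdeal_iff {K : Type*} [Field K] {m : MonomialOrder σ}
    {I : Ideal (MvPolynomial σ K)} {q : MvPolynomial σ K} :
    q ∈ initialIdeal m I ↔ ∀ d ∈ q.support, ∃ f ∈ I, f ≠ 0 ∧ m.degree f ≤ d := by
  have hspan : initialIdeal m I =
      Ideal.span ((fun f => monomial (m.mdeg f) (1 : K)) '' {f | f ∈ I ∧ f ≠ 0}) := by
    simp only [initialIdeal, Set.image, Set.mem_ofPred_eq, and_assoc, eq_comm]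
  rw [hspan, mem_span_monomial_mdeg_iff]
  simp only [Set.mem_ofPred_eq, and_assoc]

lemma span_monomial_mdeg_le_initialIdeal {K : Type*} [Field K] {m : MonomialOrder σ}
    {I : Ideal (MvPolynomial σ K)} {F : Set (MvPolynomial σ K)} (hF : F ⊆ I) (hzero : 0 ∉ F) :
    Ideal.span ((fun f => monomial (m.mdeg f) (1 : K)) '' F) ≤ initialIdeal m I :=
  Ideal.span_mono <| Set.image_subset_iff.mpr fun f hf =>
    ⟨f, hF hf, ne_of_mem_of_not_mem hf hzero, rfl⟩

lemma mem_span_prod_X_iff {R : Type*} [CommSemiring R] {P : Finset σ → Prop}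
    {q : MvPolynomial σ R} :
    q ∈ Ideal.span {g | ∃ s, P s ∧ g = ∏ i ∈ s, X i} ↔
      ∀ d ∈ q.support, ∃ s, P s ∧ s ⊆ d.support := by
  classical
  have hprod (s : Finset σ) :
      (∏ i ∈ s, X i : MvPolynomial σ R) = monomial (Finsupp.indicator s fun _ _ => 1) 1 := by
    simpa only [pow_one] using prod_X_pow (R := R) (fun _ => 1) s
  have hle (s : Finset σ) (d : σ →₀ ℕ) :
      (Finsupp.indicator s fun _ _ => 1) ≤ d ↔ s ⊆ d.support := by
    simp only [Finsupp.le_def, Finsupp.indicator_apply, Finset.subset_iff, Finsupp.mem_support_iff]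
    grind
  have himage : {g : MvPolynomial σ R | ∃ s, P s ∧ g = ∏ i ∈ s, X i} =
      (fun d => monomial d (1 : R)) ''
        ((fun s => Finsupp.indicator s fun _ _ => 1) '' {s | P s}) := by
    rw [Set.image_image]
    simp only [← hprod, Set.image, Set.mem_ofPred_eq, eq_comm]
  rw [himage, mem_ideal_span_monomial_image]
  simp only [Set.exists_mem_image, hle, Set.mem_ofPred_eq]

end MonomialIdeals

section Rename

variable {σ τ R : Type*} [CommSemiring R] (e : τ ↪ σ)

lemma forall_mem_support_rename_iff {P : (σ →₀ ℕ) → Prop} {q : MvPolynomial τ R} :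
    (∀ d ∈ (rename e q).support, P d) ↔ ∀ d ∈ q.support, P (Finsupp.embDomain e d) := by
  classical
  simp only [support_rename_of_injective e.injective, Finset.forall_mem_image,
    Finsupp.embDomain_eq_mapDomain]

/-- `m'` is the restriction of the monomial order `m` to the monomials in the variables indexed by
`τ`, which are included into those of `m` along `e`. -/
def IsRestrictedOrder (m : MonomialOrder σ) (m' : MonomialOrder τ) : Prop :=
  ∀ c d : τ →₀ ℕ, c ≼[m'] d ↔ Finsupp.embDomain e c ≼[m] Finsupp.embDomain e d

variable {e} {m : MonomialOrder σ} {m' : MonomialOrder τ}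

lemma IsRestrictedOrder.degree_rename (hm : IsRestrictedOrder e m m') (q : MvPolynomial τ R) :
    m.degree (rename e q) = Finsupp.embDomain e (m'.degree q) := by
  rcases eq_or_ne q 0 with rfl | hq
  · simp
  apply m.toSyn.injective
  apply le_antisymm
  · rw [m.degree_le_iff, forall_mem_support_rename_iff]
    exact fun d hd => (hm d _).mp (m'.le_degree hd)
  · apply m.le_degree
    rw [mem_support_iff, coeff_rename_embDomain]
    exact m'.coeff_degree_ne_zero_iff.mpr hq

end Rename

section StanleyReisner

variable {n : ℕ} {K : Type*} [Field K] {Δ : SComplex n}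

lemma SComplex.mem_srIdeal_iff {q : MvPolynomial (Fin (n + 1)) K} :
    q ∈ Δ.srIdeal K ↔ ∀ d ∈ q.support, d.support ∉ Δ.faces :=
  mem_span_prod_X_iff.trans <| forall₂_congr fun _ _ =>
    ⟨fun ⟨_, hs, hsd⟩ hd => hs (Δ.down_closed hd hsd), fun hd => ⟨_, hd, subset_rfl⟩⟩

lemma mem_srIdealAway_iff {v : Fin (n + 1)} {q : MvPolynomial {i : Fin (n + 1) // i ≠ v} K} :
    q ∈ srIdealAway K Δ v ↔
      ∀ d ∈ q.support, d.support.map (Function.Embedding.subtype fun i => i ≠ v) ∉ Δ.faces :=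
  mem_span_prod_X_iff.trans <| forall₂_congr fun _ _ =>
    ⟨fun ⟨_, hs, hsd⟩ hd => hs (Δ.down_closed hd (Finset.map_subset_map.mpr hsd)),
      fun hd => ⟨_, hd, subset_rfl⟩⟩

variable (Δ) in
lemma comap_rename_srIdeal (v : Fin (n + 1)) :
    (Δ.srIdeal K).comap (rename (Function.Embedding.subtype fun i => i ≠ v)) =
      srIdealAway K Δ v := by
  ext q
  rw [Ideal.mem_comap, SComplex.mem_srIdeal_iff, forall_mem_support_rename_iff,
    mem_srIdealAway_iff]
  simp only [Finsupp.support_embDomain]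

end StanleyReisner

lemma map_le_comap_rename {σ τ R : Type*} [CommRing R] {e : τ → σ}
    {φ : MvPolynomial σ R →ₐ[R] MvPolynomial τ R} {I : Ideal (MvPolynomial σ R)}
    (hI : ∀ i, X i - rename e (φ (X i)) ∈ I) :
    I.map φ ≤ I.comap (rename e) := by
  refine Ideal.map_le_iff_le_comap.mpr fun f hf => ?_
  have hsub : f - rename e (φ f) ∈ I := sub_algHom_mem (ψ := (rename e).comp φ) hI f
  exact (I.sub_mem_iff_right hf).mp hsub

lemma ne_zero_and_degree_le_of_degree_le_embDomain {σ τ R : Type*} [CommSemiring R]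
    {e : τ ↪ σ} {m : MonomialOrder σ} {m' : MonomialOrder τ}
    {φ : MvPolynomial σ R →ₐ[R] MvPolynomial τ R} (hm : IsRestrictedOrder e m m')
    (hφ : ∀ j, φ (X (e j)) = X j)
    (hdeg : ∀ i, m.degree (rename e (φ (X i))) ≼[m] Finsupp.single i 1)
    {f : MvPolynomial σ R} (hf : f ≠ 0) {d : τ →₀ ℕ}
    (hle : m.degree f ≤ Finsupp.embDomain e d) : φ f ≠ 0 ∧ m'.degree (φ f) ≤ d := by
  let ψ : MvPolynomial σ R →ₐ[R] MvPolynomial σ R := (rename e).comp φ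
  have hfix : ∀ i ∈ (m.degree f).support, ψ (X i) = X i := by
    intro i hi
    have hi' := Finsupp.support_mono hle hi
    rw [Finsupp.support_embDomain, Finset.mem_map] at hi'
    obtain ⟨j, -, rfl⟩ := hi'
    rw [AlgHom.comp_apply, hφ, rename_X]
  have hdegree : Finsupp.embDomain e (m'.degree (φ f)) = m.degree f := by
    rw [← hm.degree_rename]
    exact degree_algHom_eq_self (ψ := ψ) hdeg hf hfix
  constructor
  · intro hzero
    exact algHom_ne_zero_of_fixes_degree (ψ := ψ) hdeg hf hfix (by simp [ψ, hzero])
  · rwa [← hdegree, Finsupp.embDomain_le_embDomain_iff_le] at hle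

section Elimination

variable {σ τ K : Type*} [Field K] {e : τ ↪ σ} {m : MonomialOrder σ} {m' : MonomialOrder τ}
  {φ : MvPolynomial σ K →ₐ[K] MvPolynomial τ K} {I : Ideal (MvPolynomial σ K)}

lemma initialIdeal_map_le_comap_rename (hm : IsRestrictedOrder e m m')
    (hI : ∀ i, X i - rename e (φ (X i)) ∈ I) :
    initialIdeal m' (I.map φ) ≤ (initialIdeal m I).comap (rename e) := by
  intro q hq
  rw [Ideal.mem_comap, mem_initialIdeal_iff, forall_mem_support_rename_iff]
  intro d hd
  obtain ⟨p, hp, hp0, hpd⟩ := mem_initialIdeal_iff.mp hq d hd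
  refine ⟨rename e p, map_le_comap_rename hI hp,
    (map_ne_zero_iff _ (rename_injective e e.injective)).mpr hp0, ?_⟩
  rw [hm.degree_rename]
  exact Finsupp.embDomain_mono e hpd

lemma IsGroebnerBasis.comap_rename_initialIdeal_le {G : Set (MvPolynomial σ K)}
    (hG : IsGroebnerBasis m I G) (hm : IsRestrictedOrder e m m') (hφ : ∀ j, φ (X (e j)) = X j)
    (hdeg : ∀ i, m.degree (rename e (φ (X i))) ≼[m] Finsupp.single i 1) :
    (initialIdeal m I).comap (rename e) ≤
      Ideal.span ((fun q => monomial (m'.mdeg q) (1 : K)) '' {q | ∃ g ∈ G, q = φ g ∧ q ≠ 0}) := by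
  obtain ⟨-, hzero, hspan⟩ := hG
  intro q hq
  rw [Ideal.mem_comap, hspan, mem_span_monomial_mdeg_iff, forall_mem_support_rename_iff] at hq
  refine mem_span_monomial_mdeg_iff.mpr fun d hd => ?_
  obtain ⟨g, hg, hgd⟩ := hq d hd
  have hg0 : g ≠ 0 := ne_of_mem_of_not_mem hg hzero
  obtain ⟨hne, hle⟩ := ne_zero_and_degree_le_of_degree_le_embDomain hm hφ hdeg hg0 hgd
  exact ⟨φ g, ⟨g, hg, rfl, hne⟩, hle⟩

theorem substMap_groebner_basis_general (hm : IsRestrictedOrder e m m')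
    (hφ : ∀ j, φ (X (e j)) = X j)
    (hdeg : ∀ i, m.degree (rename e (φ (X i))) ≼[m] Finsupp.single i 1)
    (hI : ∀ i, X i - rename e (φ (X i)) ∈ I)
    {G : Set (MvPolynomial σ K)} (hG : IsGroebnerBasis m I G) :
    IsGroebnerBasis m' (I.map φ) {q | ∃ g ∈ G, q = φ g ∧ q ≠ 0} ∧
      initialIdeal m' (I.map φ) = (initialIdeal m I).comap (rename e) := by
  have hsub : {q | ∃ g ∈ G, q = φ g ∧ q ≠ 0} ⊆ (I.map φ : Set (MvPolynomial τ K)) := by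
    rintro _ ⟨g, hg, rfl, -⟩
    exact Ideal.mem_map_of_mem φ (hG.1 hg)
  have hzero : 0 ∉ {q | ∃ g ∈ G, q = φ g ∧ q ≠ 0} := fun ⟨_, _, _, hne⟩ => hne rfl
  have hcontract := initialIdeal_map_le_comap_rename hm hI
  have hdivide := hG.comap_rename_initialIdeal_le hm hφ hdeg
  have hlead := span_monomial_mdeg_le_initialIdeal (m := m') hsub hzero
  exact ⟨⟨hsub, hzero, (hcontract.trans hdivide).antisymm hlead⟩,
    hcontract.antisymm (hdivide.trans hlead)⟩

end Elimination

section SubstMap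

variable {n : ℕ} {K : Type*} [Field K] (v : Fin (n + 1)) (lam : Fin (n + 1) → K)

lemma substMap_X_coe (j : {i : Fin (n + 1) // i ≠ v}) :
    substMap v lam (X (j : Fin (n + 1))) = X j := by
  rw [substMap, aeval_X, dif_neg j.2]

lemma rename_substMap_X_of_ne {i : Fin (n + 1)} (hi : i ≠ v) :
    rename (Function.Embedding.subtype fun i => i ≠ v) (substMap v lam (X i)) = X i := by
  rw [substMap_X_coe v lam ⟨i, hi⟩, rename_X]
  rfl

lemma rename_substMap_X_self :
    rename (Function.Embedding.subtype fun i => i ≠ v) (substMap v lam (X v)) =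
      -∑ j : Fin (n + 1), if v < j then C (lam j) * X j else 0 := by
  rw [substMap, aeval_X, dif_pos rfl, map_neg, map_sum]
  congr 1
  refine Finset.sum_congr rfl fun j _ => ?_
  split_ifs
  · rw [map_mul, rename_C, rename_X]
    rfl
  · exact map_zero _

lemma degree_rename_substMap_X_le {m : MonomialOrder (Fin (n + 1))} (hm : m.Descending)
    (i : Fin (n + 1)) :
    m.degree (rename (Function.Embedding.subtype fun i => i ≠ v) (substMap v lam (X i))) ≼[m]
      Finsupp.single i 1 := by
  rcases eq_or_ne i v with rfl | hi
  · rw [rename_substMap_X_self, m.degree_neg]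
    refine m.degree_sum_le.trans (Finset.sup_le fun j _ => ?_)
    split_ifs with hj
    · rw [C_mul_X_eq_monomial]
      exact (m.degree_monomial_le _).trans (hm i j hj).le
    · simp
  · rw [rename_substMap_X_of_ne v lam hi]
    exact m.degree_X_le_single

variable {v lam} in
lemma X_sub_rename_substMap_X_mem {I : Ideal (MvPolynomial (Fin (n + 1)) K)}
    (hl : X v + (∑ j : Fin (n + 1), if v < j then C (lam j) * X j else 0) ∈ I)
    (i : Fin (n + 1)) :
    X i - rename (Function.Embedding.subtype fun i => i ≠ v) (substMap v lam (X i)) ∈ I := by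
  rcases eq_or_ne i v with rfl | hi
  · rwa [rename_substMap_X_self, sub_neg_eq_add]
  · rw [rename_substMap_X_of_ne v lam hi, sub_self]
    exact I.zero_mem

end SubstMap

/-- **Statement 5.** Suppose `in_<(I) = I_Δ` with `X_0 > ⋯ > X_n` and `{v} ∉ Δ`, so that
`X_v ∈ in_<(I)` and `I` contains a linear form `ℓ = X_v + ∑_{i > v} λ_i X_i`.  Then the image
of any Gröbner basis of `I` under the substitution `X_v ↦ -∑_{i > v} λ_i X_i` is a Gröbner
basis of the image ideal `I' = I/ℓS ⊆ S' = K[X_j : j ≠ v]` with respect to the restricted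
monomial order `<'`, and `in_{<'}(I') = I_Δ` with `Δ` regarded on the vertex set
`{0, …, n} \ {v}`. -/
theorem substMap_groebner_basis {K : Type*} [Field K] {n : ℕ}
    (m : MonomialOrder (Fin (n + 1))) (hm : m.Descending)
    (Δ : SComplex n)
    (I : Ideal (MvPolynomial (Fin (n + 1)) K)) (hI : IsHomog I)
    (hin : initialIdeal m I = Δ.srIdeal K)
    (v : Fin (n + 1)) (hv : ({v} : Finset (Fin (n + 1))) ∉ Δ.faces)
    (lam : Fin (n + 1) → K)
    (hl : X v + (∑ j : Fin (n + 1), if v < j then C (lam j) * X j else 0) ∈ I)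
    (G : Set (MvPolynomial (Fin (n + 1)) K)) (hG : IsGroebnerBasis m I G)
    -- `<'`, the restriction of `<` to the variables `X_j`, `j ≠ v`:
    (m' : MonomialOrder {i : Fin (n + 1) // i ≠ v})
    (hm' : ∀ c d : {i : Fin (n + 1) // i ≠ v} →₀ ℕ,
      m'.toSyn c ≤ m'.toSyn d ↔
        m.toSyn (Finsupp.embDomain (Function.Embedding.subtype fun i => i ≠ v) c) ≤
          m.toSyn (Finsupp.embDomain (Function.Embedding.subtype fun i => i ≠ v) d)) :
    -- the image of `G` is a Gröbner basis of `I' = I/ℓS`: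
    ((∀ g ∈ G, substMap v lam g ∈ I.map (substMap v lam)) ∧
      initialIdeal m' (I.map (substMap v lam)) =
        Ideal.span ((fun q => monomial (m'.mdeg q) (1 : K)) ''
          {q | ∃ g ∈ G, q = substMap v lam g ∧ q ≠ 0})) ∧
    -- and `in_{<'}(I') = I_Δ` on the vertex set `{0, …, n} \ {v}`:
    initialIdeal m' (I.map (substMap v lam)) = srIdealAway K Δ v := by
  obtain ⟨hbasis, hinit⟩ := substMap_groebner_basis_general hm' (substMap_X_coe v lam)
    (degree_rename_substMap_X_le v lam hm) (X_sub_rename_substMap_X_mem hl) hG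
  exact ⟨⟨fun g hg => Ideal.mem_map_of_mem _ (hG.1 hg), hbasis.2.2⟩,
    by rw [hinit, hin, comap_rename_srIdeal]⟩
end
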